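/- Let n ≥ 1, let λ/μ be a skew shape, and let N be an integer at least the number of parts of λ. In the one-row n-ribbon lattice model with horizontal-strip row weights (parameter x) and boundary condition B_{λ/μ}, the admissible states of nonzero weight are in bijection with the horizontal n-ribbon strips of shape λ/μ, and the state corresponding to a strip S consisting of m ribbons with total spin σ(S) has weight q^{σ(S)}·x^m. Consequently the partition function equals Σ_S q^{σ(S)} x^{m(S)}, summed over all horizontal n-ribbon strips S of shape λ/μ. -/

import Mathlib

/-!
The parts of `μ + ρ` are viewed as a configuration of particles on the sites `1, 2, …`
(`maya μ N`).  Adding an `n`-ribbon to a partition moves one particle from a site `c` to the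
empty site `c + n`; the spin of the ribbon is the number of particles jumped over, and the
content of its top-right-most cell records `c + n` (`jump_of_ribbon`, `exists_jump`).

In a state of nonzero weight, the label `<` travels through the `n` positions of the
horizontal tuples, so it records a jump of length `n`.  The vertex in column `c` is then a
conservation law at the site `c`: a particle present from the start, or one arriving by a jump
from `c - n` (never both, since `SE` has weight zero), either stays or jumps on.  Hence states
of nonzero weight are the same as sets `A` of starting points satisfying `Valid`
(`exists_valid_of_state`, `stateOf`), and the conservation law determines `A` from left to
right (`Valid.unique`).  The weight of the state is `x` to the number of jumps times `q` to the
number of pairs (jump, particle jumped over) (`stateWeight_stateOf`).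

On the side of tilings, the ribbon of a horizontal strip whose head lies on the leftmost
diagonal can be added to `μ` first (`lowerSet_union`, `peel`), because the heads touch the
northern boundary and disjoint ribbons cannot cross; conversely a ribbon with head left of
all others can be put in front of a horizontal strip (`unpeel`).  By induction on the number of
ribbons, horizontal strips of shape `lam / μ` correspond to the sets `A`, with the same spin
and number of ribbons (`exists_tiling_of_valid`, `exists_valid_of_tiling`), and there is at most
one of them (`tiling_unique`).  So both sides of the bijection are simultaneously empty, or
both have exactly one element, with matching weights.
-/

open Finset

namespace SuperLLT

/-- Two cells in `ℕ × ℕ` are adjacent if they share an edge. -/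
def Adj (c d : ℕ × ℕ) : Prop :=
  (c.1 = d.1 ∧ (c.2 + 1 = d.2 ∨ d.2 + 1 = c.2)) ∨
    (c.2 = d.2 ∧ (c.1 + 1 = d.1 ∨ d.1 + 1 = c.1))

/-- A finite set of cells is connected if any two of its cells are joined by a path of
adjacent cells staying inside the set. -/
def ConnectedCells (s : Finset (ℕ × ℕ)) : Prop :=
  ∀ c ∈ s, ∀ d ∈ s, Relation.ReflTransGen (fun a b => a ∈ s ∧ b ∈ s ∧ Adj a b) c d

/-- A set of cells is (the set of cells of) a skew shape if it is the difference of two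
Young diagrams. -/
def IsSkewCells (s : Finset (ℕ × ℕ)) : Prop :=
  ∃ μ lam : YoungDiagram, μ ≤ lam ∧ s = lam.cells \ μ.cells

/-- The set of cells contains no 2×2 square. -/
def NoTwoByTwo (s : Finset (ℕ × ℕ)) : Prop :=
  ∀ i j : ℕ, ¬((i, j) ∈ s ∧ (i + 1, j) ∈ s ∧ (i, j + 1) ∈ s ∧ (i + 1, j + 1) ∈ s)

/-- An `n`-ribbon: a connected skew shape with `n` cells containing no 2×2 square. -/
def IsRibbon (n : ℕ) (s : Finset (ℕ × ℕ)) : Prop :=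
  s.card = n ∧ IsSkewCells s ∧ ConnectedCells s ∧ NoTwoByTwo s

/-- The spin of a ribbon: its number of rows minus one. -/
def spin (s : Finset (ℕ × ℕ)) : ℕ :=
  (s.image Prod.fst).card - 1

/-- The top-right-most cell of a ribbon: minimal row index, maximal column in that row. -/
def topRight (s : Finset (ℕ × ℕ)) : ℕ × ℕ :=
  ((s.image Prod.fst).min.getD 0,
    ((s.filter fun c => c.1 = (s.image Prod.fst).min.getD 0).image Prod.snd).max.getD 0)

/-- The bottom-left-most cell of a ribbon: maximal row index, minimal column in that row. -/
def bottomLeft (s : Finset (ℕ × ℕ)) : ℕ × ℕ :=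
  ((s.image Prod.fst).max.getD 0,
    ((s.filter fun c => c.1 = (s.image Prod.fst).max.getD 0).image Prod.snd).min.getD 0)

/-- The cell `c` of the strip with cell set `strip` touches the northern boundary of the
strip: the cell directly above `c` is not a cell of the strip. -/
def TouchesNorth (strip : Finset (ℕ × ℕ)) (c : ℕ × ℕ) : Prop :=
  c.1 = 0 ∨ (c.1 - 1, c.2) ∉ strip

/-- The cell `c` lies along the (upper-left) boundary of the strip: the cell directly to
the left of `c` is not a cell of the strip.  This is the condition on the bottom-left-most
box of each ribbon of a vertical ribbon strip (equivalently, flipping a vertical strip over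
the antidiagonal produces a horizontal strip whose ribbon heads touch the northern
boundary). -/
def TouchesWest (strip : Finset (ℕ × ℕ)) (c : ℕ × ℕ) : Prop :=
  c.2 = 0 ∨ (c.1, c.2 - 1) ∉ strip

/-- `tiles` is a tiling of the cell set `cells` by `n`-ribbons. -/
def IsTilingOf (n : ℕ) (cells : Finset (ℕ × ℕ)) (tiles : Finset (Finset (ℕ × ℕ))) : Prop :=
  (∀ t ∈ tiles, IsRibbon n t) ∧
    (∀ t ∈ tiles, ∀ t' ∈ tiles, t ≠ t' → Disjoint t t') ∧
    tiles.sup id = cells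

/-- A horizontal `n`-ribbon strip tiling: the top-right-most box of every ribbon touches
the northern boundary of the strip. -/
def IsHorizontalTiling (n : ℕ) (cells : Finset (ℕ × ℕ))
    (tiles : Finset (Finset (ℕ × ℕ))) : Prop :=
  IsTilingOf n cells tiles ∧ ∀ t ∈ tiles, TouchesNorth cells (topRight t)

/-- A vertical `n`-ribbon strip tiling: the bottom-left-most box of every ribbon lies on
the (north-west) boundary of the strip. -/
def IsVerticalTiling (n : ℕ) (cells : Finset (ℕ × ℕ))
    (tiles : Finset (Finset (ℕ × ℕ))) : Prop :=
  IsTilingOf n cells tiles ∧ ∀ t ∈ tiles, TouchesWest cells (bottomLeft t)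

open scoped Classical in
/-- `T` is a super `n`-ribbon tableau of shape `lam / μ`: a set of `n`-ribbons, each
labelled by a letter of `L`, tiling `lam / μ`, such that for every letter `i` the union of
`μ` with the ribbons labelled `≼ i` (with respect to the total order `le` on `L`) is a
partition shape, the ribbons with a fixed label `a` with `horiz a` form a horizontal
ribbon strip, and the ribbons with a fixed label `b` with `¬ horiz b` form a vertical
ribbon strip. -/
def IsSuperTableau (n : ℕ) (μ lam : YoungDiagram) {L : Type*}
    (le : L → L → Prop) (horiz : L → Prop) (T : Finset (Finset (ℕ × ℕ) × L)) : Prop :=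
  μ ≤ lam ∧
    (∀ p ∈ T, IsRibbon n p.1) ∧
    (∀ p ∈ T, ∀ p' ∈ T, p ≠ p' → Disjoint p.1 p'.1) ∧
    (T.sup fun p => p.1) = lam.cells \ μ.cells ∧
    (∀ i : L, ∃ ν : YoungDiagram,
      ν.cells = μ.cells ∪ ((T.filter fun p => le p.2 i).sup fun p => p.1)) ∧
    (∀ p ∈ T,
      (horiz p.2 →
        TouchesNorth ((T.filter fun p' => p'.2 = p.2).sup fun p' => p'.1) (topRight p.1)) ∧
      (¬horiz p.2 →
        TouchesWest ((T.filter fun p' => p'.2 = p.2).sup fun p' => p'.1) (bottomLeft p.1)))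

open scoped Classical in
/-- The (finite) set of all super `n`-ribbon tableaux of shape `lam / μ` with letters in
`L`. -/
noncomputable def superTableaux (n : ℕ) (μ lam : YoungDiagram) (L : Type*) [Fintype L]
    (le : L → L → Prop) (horiz : L → Prop) : Finset (Finset (Finset (ℕ × ℕ) × L)) :=
  ((lam.cells \ μ.cells).powerset ×ˢ (Finset.univ : Finset L)).powerset.filter
    (IsSuperTableau n μ lam le horiz)

/-- The spin of a tableau: the sum of the spins of its ribbons. -/
def tabSpin {L : Type*} (T : Finset (Finset (ℕ × ℕ) × L)) : ℕ :=
  ∑ p ∈ T, spin p.1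

open scoped Classical in
/-- The number of ribbons of the tableau `T` labelled `a`. -/
noncomputable def tabWt {L : Type*} (T : Finset (Finset (ℕ × ℕ) × L)) (a : L) : ℕ :=
  (T.filter fun p => p.2 = a).card

open scoped Classical in
/-- The super LLT polynomial `G_{lam/μ}(X/Y; q)`, evaluated in a commutative ring `R`:
`q` is the spin parameter and `z a` is the variable attached to the letter `a`; a ribbon
labelled by a horizontal letter `a` contributes a factor `z a`, and one labelled by a
vertical letter `b` contributes `-(z b)`.  (It is `0` if `¬ μ ≤ lam`.) -/
noncomputable def superLLT (n : ℕ) (μ lam : YoungDiagram) (L : Type*) [Fintype L]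
    (le : L → L → Prop) (horiz : L → Prop) {R : Type*} [CommRing R] (q : R) (z : L → R) :
    R :=
  ∑ T ∈ superTableaux n μ lam L le horiz,
    q ^ tabSpin T * ∏ a : L, (if horiz a then z a else -z a) ^ tabWt T a

/-- The total order on `Fin r ⊕ Fin s` in which all letters of the first alphabet precede
all letters of the second alphabet. -/
def sumLe {r s : ℕ} : Fin r ⊕ Fin s → Fin r ⊕ Fin s → Prop
  | Sum.inl i, Sum.inl j => i ≤ j
  | Sum.inl _, Sum.inr _ => True
  | Sum.inr _, Sum.inl _ => False
  | Sum.inr i, Sum.inr j => i ≤ j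

end SuperLLT

namespace SuperLLT

/-- The six admissible vertex types of the `n`-ribbon lattice model. -/
inductive VertexType
  | SW | NS | SE | NW | EW | NE
  deriving DecidableEq

/-- Classify an admissible vertex by `(v_N, v_S, v_W(1), v_E(n))`, where on vertical
edges `true` stands for `∧` and on horizontal edges `true` stands for `<`:
`SW = (∧,∧,>,>)`, `NS = (∨,∧,<,>)`, `SE = (∧,∧,<,<)`, `NW = (∨,∨,>,>)`,
`EW = (∧,∨,>,<)`, `NE = (∨,∨,<,<)`; all other configurations are inadmissible. -/
def classify : Bool → Bool → Bool → Bool → Option VertexType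
  | true, true, false, false => some .SW
  | false, true, true, false => some .NS
  | true, true, true, true => some .SE
  | false, false, false, false => some .NW
  | true, false, false, true => some .EW
  | false, false, true, true => some .NE
  | _, _, _, _ => none

/-- A vertex of the `n`-ribbon lattice model is admissible if the labels do not change
along straight edges (`v_E(i) = v_W(i+1)` for `1 ≤ i ≤ n-1`) and as many arrows point in
as out, i.e. `(v_N, v_S, v_W(1), v_E(n))` is one of the six admissible types.
Tuples are indexed by `Fin n`, with index `k` standing for position `k+1`. -/
def VertexAdmissible (n : ℕ) (vN vS : Bool) (vW vE : Fin n → Bool) : Prop :=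
  ∃ h : 0 < n,
    (∀ k : Fin n, ∀ hk : k.val + 1 < n, vE k = vW ⟨k.val + 1, hk⟩) ∧
      (classify vN vS (vW ⟨0, h⟩) (vE ⟨n - 1, Nat.sub_lt h Nat.one_pos⟩)).isSome = true

/-- The Boltzmann weight of a single vertex, given a table `tab` assigning a weight to
each admissible vertex type and each value of `s(v)`, the number of `<` labels among
`v_E(1), …, v_E(n-1)`.  Inadmissible vertices have weight `0`. -/
def vertexWeight {R : Type*} [CommRing R] (n : ℕ) (tab : VertexType → ℕ → R)
    (vN vS : Bool) (vW vE : Fin n → Bool) : R :=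
  if h : 0 < n then
    if ∀ k : Fin n, ∀ hk : k.val + 1 < n, vE k = vW ⟨k.val + 1, hk⟩ then
      match classify vN vS (vW ⟨0, h⟩) (vE ⟨n - 1, Nat.sub_lt h Nat.one_pos⟩) with
      | some ty =>
          tab ty ((Finset.univ.filter fun k : Fin n => k.val < n - 1 ∧ vE k = true).card)
      | none => 0
    else 0
  else 0

/-- Weights of a *horizontal-strip* row with spectral parameter `x` in the (original)
super ribbon lattice model:
`SW ↦ q^s`, `NS ↦ q^s`, `SE ↦ 0`, `NW ↦ 1`, `EW ↦ q^s x`, `NE ↦ q^s x`. -/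
def horizTable {R : Type*} [CommRing R] (q x : R) : VertexType → ℕ → R
  | .SW, s => q ^ s
  | .NS, s => q ^ s
  | .SE, _ => 0
  | .NW, _ => 1
  | .EW, s => q ^ s * x
  | .NE, s => q ^ s * x

/-- Weights of a *vertical-strip* row with spectral parameter `y` in the (original)
super ribbon lattice model:
`SW ↦ q^s`, `NS ↦ 1`, `SE ↦ -y`, `NW ↦ 1`, `EW ↦ -y`, `NE ↦ 0`. -/
def vertTable {R : Type*} [CommRing R] (q y : R) : VertexType → ℕ → R
  | .SW, s => q ^ s
  | .NS, _ => 1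
  | .SE, _ => -y
  | .NW, _ => 1
  | .EW, _ => -y
  | .NE, _ => 0

/-- Weights of a horizontal-strip row with spectral parameter `x` in the *alternate*
super ribbon lattice model, where `t(v) = (n-1) - s(v)` is the number of `>` labels
among `v_E(1), …, v_E(n-1)`:
`SW ↦ 0`, `NS ↦ q^t x`, `SE ↦ q^t`, `NW ↦ q^t x`, `EW ↦ q^t`, `NE ↦ 1`. -/
def altHorizTable {R : Type*} [CommRing R] (n : ℕ) (q x : R) : VertexType → ℕ → R
  | .SW, _ => 0
  | .NS, s => q ^ (n - 1 - s) * x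
  | .SE, s => q ^ (n - 1 - s)
  | .NW, s => q ^ (n - 1 - s) * x
  | .EW, s => q ^ (n - 1 - s)
  | .NE, _ => 1

/-- Weights of a vertical-strip row with spectral parameter `y` in the *alternate*
super ribbon lattice model:
`SW ↦ -y`, `NS ↦ -y`, `SE ↦ q^t`, `NW ↦ 0`, `EW ↦ 1`, `NE ↦ 1`. -/
def altVertTable {R : Type*} [CommRing R] (n : ℕ) (q y : R) : VertexType → ℕ → R
  | .SW, _ => -y
  | .NS, _ => -y
  | .SE, s => q ^ (n - 1 - s)
  | .NW, _ => 0
  | .EW, _ => 1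
  | .NE, _ => 1

/-- A state of an `n`-ribbon lattice grid with `m` rows and `C` columns: a label in
`Bool` (`true = ∧`) on each vertical edge (`m+1` tiers of `C` columns, tier `0` being the
top boundary and tier `m` the bottom boundary) and an `n`-tuple of labels in `Bool`
(`true = <`) on each horizontal edge (`C+1` edges in each of the `m` rows, edge `0` being
the left boundary and edge `C` the right boundary). -/
abbrev GridState (n m C : ℕ) : Type :=
  (Fin (m + 1) → Fin C → Bool) × (Fin m → Fin (C + 1) → Fin n → Bool)

/-- The Boltzmann weight of a state: the product of the weights of its vertices, row `r`
using the weight table `tab r`. -/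
def stateWeight {R : Type*} [CommRing R] (n m C : ℕ) (tab : Fin m → VertexType → ℕ → R)
    (st : GridState n m C) : R :=
  ∏ r : Fin m, ∏ c : Fin C,
    vertexWeight n (tab r) (st.1 r.castSucc c) (st.1 r.succ c)
      (st.2 r c.castSucc) (st.2 r c.succ)

/-- The boundary condition: prescribed labels on the top, bottom, left and right
boundary edges. -/
def BoundaryCond {n m C : ℕ} (top bottom : Fin C → Bool)
    (left right : Fin m → Fin n → Bool) (st : GridState n m C) : Prop :=
  st.1 0 = top ∧ st.1 (Fin.last m) = bottom ∧
    ∀ r : Fin m, st.2 r 0 = left r ∧ st.2 r (Fin.last C) = right r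

open scoped Classical in
/-- The partition function of the lattice model: the sum of the weights of all states
with the given boundary condition. -/
noncomputable def partitionZ {R : Type*} [CommRing R] (n m C : ℕ)
    (tab : Fin m → VertexType → ℕ → R) (top bottom : Fin C → Bool)
    (left right : Fin m → Fin n → Bool) : R :=
  ∑ st ∈ Finset.univ.filter (BoundaryCond top bottom left right),
    stateWeight n m C tab st

/-- The boundary row of vertical-edge labels determined by `lam + ρ`, where
`ρ = (N, N-1, …, 1)` and `lam` is padded with zeros to `N` parts: numbering the `C`
columns `1, …, C` from the left, column `c` carries `∧ = true` exactly if `c` is a part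
of `lam + ρ`, i.e. of the form `lam_{t+1} + (N - t)` for some `0 ≤ t < N`. -/
def diagBoundary (lam : YoungDiagram) (N C : ℕ) : Fin C → Bool := fun c =>
  decide ((c.val + 1) ∈ (Finset.range N).image fun t => lam.rowLen t + (N - t))

end SuperLLT

namespace SuperLLT

open scoped Classical in
/-- The (finite) set of horizontal `n`-ribbon strip tilings of the skew shape
`lam / μ`. -/
noncomputable def horizontalTilings (n : ℕ) (μ lam : YoungDiagram) :
    Finset (Finset (Finset (ℕ × ℕ))) :=
  ((lam.cells \ μ.cells).powerset.powerset).filter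
    (IsHorizontalTiling n (lam.cells \ μ.cells))

open scoped Classical in
/-- The (finite) set of vertical `n`-ribbon strip tilings of the skew shape `lam / μ`. -/
noncomputable def verticalTilings (n : ℕ) (μ lam : YoungDiagram) :
    Finset (Finset (Finset (ℕ × ℕ))) :=
  ((lam.cells \ μ.cells).powerset.powerset).filter
    (IsVerticalTiling n (lam.cells \ μ.cells))

/-- The total spin of a set of ribbons. -/
def tilesSpin (tiles : Finset (Finset (ℕ × ℕ))) : ℕ :=
  ∑ t ∈ tiles, spin t

end SuperLLT

namespace SuperLLT

/-! ### Contents, skew shapes and ribbons -/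

/-- The content (diagonal index) of a cell: column minus row. -/
def cont (x : ℕ × ℕ) : ℤ := (x.2 : ℤ) - x.1

lemma mem_skew_iff (μ lam : YoungDiagram) (i j : ℕ) :
    (i, j) ∈ lam.cells \ μ.cells ↔ μ.rowLen i ≤ j ∧ j < lam.rowLen i := by
  rw [Finset.mem_sdiff, YoungDiagram.mem_cells, YoungDiagram.mem_cells,
    YoungDiagram.mem_iff_lt_rowLen, YoungDiagram.mem_iff_lt_rowLen]
  omega

lemma rowLen_le_of_le {μ lam : YoungDiagram} (h : μ ≤ lam) (t : ℕ) :
    μ.rowLen t ≤ lam.rowLen t := by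
  by_contra! hlt
  have h1 : (t, lam.rowLen t) ∈ μ := YoungDiagram.mem_iff_lt_rowLen.2 hlt
  have h2 := YoungDiagram.mem_iff_lt_rowLen.1 (h h1)
  omega

lemma le_of_rowLen_le {μ lam : YoungDiagram} (h : ∀ t, μ.rowLen t ≤ lam.rowLen t) :
    μ ≤ lam := by
  rintro ⟨i, j⟩ hx
  have h1 := YoungDiagram.mem_iff_lt_rowLen.1 (show (i, j) ∈ μ from hx)
  exact YoungDiagram.mem_iff_lt_rowLen.2 (lt_of_lt_of_le h1 (h i))

/-- Skew shapes are convex for the product order on cells. -/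
lemma skew_convex {s : Finset (ℕ × ℕ)} (hs : IsSkewCells s) {a b c d x y : ℕ}
    (h1 : (a, b) ∈ s) (h2 : (c, d) ∈ s) (hax : a ≤ x) (hxc : x ≤ c) (hby : b ≤ y)
    (hyd : y ≤ d) : (x, y) ∈ s := by
  obtain ⟨μ, lam, -, rfl⟩ := hs
  rw [mem_skew_iff] at *
  have := μ.rowLen_anti a x hax
  have := lam.rowLen_anti x c hxc
  omega

/-- A ribbon has at most one cell on each diagonal. -/
lemma ribbon_diag_unique {n : ℕ} {s : Finset (ℕ × ℕ)} (hs : IsRibbon n s) {x y : ℕ × ℕ}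
    (hx : x ∈ s) (hy : y ∈ s) (h : cont x = cont y) : x = y := by
  obtain ⟨-, hsk, -, h22⟩ := hs
  obtain ⟨a, b⟩ := x
  obtain ⟨c, d⟩ := y
  simp only [cont] at h
  rcases lt_trichotomy a c with hac | hac | hac
  · exfalso
    refine h22 a b ⟨hx, ?_, ?_, ?_⟩ <;> apply skew_convex hsk hx hy <;> omega
  · ext <;> (simp only; omega)
  · exfalso
    refine h22 c d ⟨hy, ?_, ?_, ?_⟩ <;> apply skew_convex hsk hy hx <;> omega

/-- A path of adjacent cells crosses every diagonal between its endpoints by a step from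
that diagonal to the next one. -/
lemma path_cross {s : Finset (ℕ × ℕ)} {x y : ℕ × ℕ} {d : ℤ}
    (h : Relation.ReflTransGen (fun a b => a ∈ s ∧ b ∈ s ∧ Adj a b) x y)
    (hx : cont x ≤ d) (hy : d < cont y) :
    ∃ p q, p ∈ s ∧ q ∈ s ∧ Adj p q ∧ cont p = d ∧ cont q = d + 1 := by
  induction h with
  | refl => omega
  | @tail b c _ hbc ih =>
    by_cases hb : d < cont b
    · exact ih hb
    · refine ⟨b, c, hbc.1, hbc.2.1, hbc.2.2, ?_⟩
      have hadj := hbc.2.2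
      simp only [Adj, cont] at *
      omega

/-- A path of adjacent cells crosses from row `t + 1` to row `t` along a vertical edge. -/
lemma path_cross_row {s : Finset (ℕ × ℕ)} {x y : ℕ × ℕ} {t : ℕ}
    (h : Relation.ReflTransGen (fun a b => a ∈ s ∧ b ∈ s ∧ Adj a b) x y)
    (hx : t < x.1) (hy : y.1 ≤ t) :
    ∃ c, (t, c) ∈ s ∧ (t + 1, c) ∈ s := by
  induction h with
  | refl => omega
  | @tail b c _ hbc ih =>
    by_cases hb : b.1 ≤ t
    · exact ih hb
    · obtain ⟨h1, h2, hadj⟩ := hbc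
      obtain ⟨b1, b2⟩ := b
      obtain ⟨c1, c2⟩ := c
      simp only [Adj] at *
      refine ⟨b2, ?_, ?_⟩
      · convert h2 using 2 <;> omega
      · convert h1 using 2; omega

/-- From a cell of a ribbon which is not on its last diagonal, the ribbon continues to the
right or upwards. -/
lemma ribbon_step {n : ℕ} {s : Finset (ℕ × ℕ)} (hs : IsRibbon n s) {x y : ℕ × ℕ}
    (hx : x ∈ s) (hy : y ∈ s) (h : cont x < cont y) :
    (x.1, x.2 + 1) ∈ s ∨ ∃ r, x.1 = r + 1 ∧ (r, x.2) ∈ s := by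
  obtain ⟨p, q, hp, hq, hadj, hpd, hqd⟩ := path_cross (hs.2.2.1 x hx y hy) le_rfl h
  obtain rfl := ribbon_diag_unique hs hp hx hpd
  obtain ⟨p1, p2⟩ := p
  obtain ⟨q1, q2⟩ := q
  simp only [Adj, cont] at *
  rcases hadj with ⟨h1, h2⟩ | ⟨h1, h2⟩
  · left
    convert hq using 2; omega
  · right
    refine ⟨q1, by omega, ?_⟩
    convert hq using 2

/-- The top-right-most cell of a nonempty set belongs to it, lies in its first row, and is
the last cell of that row. -/
lemma topRight_spec {s : Finset (ℕ × ℕ)} (hs : s.Nonempty) :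
    topRight s ∈ s ∧ (∀ x ∈ s, (topRight s).1 ≤ x.1) ∧
      ∀ x ∈ s, x.1 = (topRight s).1 → x.2 ≤ (topRight s).2 := by
  have hne : (s.image Prod.fst).Nonempty := hs.image _
  obtain ⟨r, hr⟩ := Finset.min_of_nonempty hne
  have hget : (s.image Prod.fst).min.getD 0 = r := by rw [hr]; rfl
  obtain ⟨x0, hx0, hx0r⟩ := Finset.mem_image.1 (Finset.mem_of_min hr)
  have hne2 : ((s.filter fun c => c.1 = r).image Prod.snd).Nonempty :=
    ⟨x0.2, Finset.mem_image_of_mem _ (Finset.mem_filter.2 ⟨hx0, hx0r⟩)⟩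
  obtain ⟨c, hc⟩ := Finset.max_of_nonempty hne2
  have hget2 : ((s.filter fun c => c.1 = r).image Prod.snd).max.getD 0 = c := by rw [hc]; rfl
  have htr : topRight s = (r, c) := by
    unfold topRight
    rw [hget, hget2]
  obtain ⟨x1, hx1, hx1c⟩ := Finset.mem_image.1 (Finset.mem_of_max hc)
  rw [Finset.mem_filter] at hx1
  rw [htr]
  refine ⟨?_, ?_, ?_⟩
  · have : x1 = (r, c) := Prod.ext hx1.2 hx1c
    rw [← this]; exact hx1.1
  · intro x hx
    exact Finset.min_le_of_eq (Finset.mem_image_of_mem _ hx) hr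
  · intro x hx hxr
    exact Finset.le_max_of_eq
      (Finset.mem_image_of_mem _ (Finset.mem_filter.2 ⟨hx, hxr⟩)) hc

lemma ribbon_nonempty {n : ℕ} (hn : 1 ≤ n) {s : Finset (ℕ × ℕ)} (hs : IsRibbon n s) :
    s.Nonempty := by
  rw [← Finset.card_pos, hs.1]; omega

/-- The top-right-most cell of a ribbon is the one of largest content. -/
lemma ribbon_cont_le_head {n : ℕ} (hn : 1 ≤ n) {s : Finset (ℕ × ℕ)} (hs : IsRibbon n s)
    {x : ℕ × ℕ} (hx : x ∈ s) : cont x ≤ cont (topRight s) := by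
  obtain ⟨h1, h2, h3⟩ := topRight_spec (ribbon_nonempty hn hs)
  by_contra! hlt
  rcases ribbon_step hs h1 hx hlt with h | ⟨r, hr, h⟩
  · have := h3 _ h rfl
    simp at this
  · have := h2 _ h
    simp at this
    omega

end SuperLLT

namespace SuperLLT

/-! ### Particle configurations of partitions -/

/-- The `t`-th part of `μ + ρ`, where `ρ = (N, N - 1, …)`. -/
def pos (μ : YoungDiagram) (N t : ℕ) : ℤ := (μ.rowLen t : ℤ) + N - t

/-- The set of parts of `μ + ρ`, where `μ` is padded to `N` parts. -/
def maya (μ : YoungDiagram) (N : ℕ) : Finset ℤ := (Finset.range N).image (pos μ N)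

lemma mem_maya {μ : YoungDiagram} {N : ℕ} {p : ℤ} :
    p ∈ maya μ N ↔ ∃ t, t < N ∧ pos μ N t = p := by
  simp [maya]

lemma pos_strictAnti (μ : YoungDiagram) (N : ℕ) : StrictAnti (pos μ N) := by
  intro a b hab
  have := μ.rowLen_anti a b hab.le
  simp only [pos]
  omega

lemma pos_inj {μ : YoungDiagram} {N a b : ℕ} : pos μ N a = pos μ N b ↔ a = b :=
  (pos_strictAnti μ N).injective.eq_iff

lemma rowLen_eq_zero {μ : YoungDiagram} {N : ℕ} (hμ : μ.rowLen N = 0) {t : ℕ} (ht : N ≤ t) :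
    μ.rowLen t = 0 := by
  have := μ.rowLen_anti N t ht
  omega

lemma eq_of_rowLen_eq {μ ν : YoungDiagram} (h : ∀ t, μ.rowLen t = ν.rowLen t) : μ = ν :=
  le_antisymm (le_of_rowLen_le fun t => (h t).le) (le_of_rowLen_le fun t => (h t).ge)

/-- A partition with at most `N` parts is determined by its particle configuration. -/
lemma maya_injective {μ ν : YoungDiagram} {N : ℕ} (hμ : μ.rowLen N = 0) (hν : ν.rowLen N = 0)
    (h : maya μ N = maya ν N) : μ = ν := by
  have key : (fun t : Fin N => pos μ N t) = fun t : Fin N => pos ν N t := by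
    have anti : ∀ κ : YoungDiagram, StrictAnti fun t : Fin N => pos κ N t :=
      fun κ a b hab => pos_strictAnti κ N hab
    refine ((anti μ).range_inj (anti ν)).1 ?_
    ext p
    have := Finset.ext_iff.1 h p
    simp only [mem_maya] at this
    constructor
    · rintro ⟨t, rfl⟩
      obtain ⟨u, hu, hup⟩ := this.1 ⟨t, t.2, rfl⟩
      exact ⟨⟨u, hu⟩, hup⟩
    · rintro ⟨t, rfl⟩
      obtain ⟨u, hu, hup⟩ := this.2 ⟨t, t.2, rfl⟩
      exact ⟨⟨u, hu⟩, hup⟩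
  apply eq_of_rowLen_eq
  intro t
  by_cases ht : t < N
  · have := congrFun key ⟨t, ht⟩
    simp only [pos] at this
    omega
  · rw [rowLen_eq_zero hμ (by omega), rowLen_eq_zero hν (by omega)]

lemma card_cells_eq_sum {μ : YoungDiagram} {N : ℕ} (hμ : μ.rowLen N = 0) :
    μ.cells.card = ∑ t ∈ Finset.range N, μ.rowLen t := by
  have hmaps : ∀ x ∈ μ.cells, x.1 ∈ Finset.range N := by
    rintro ⟨a, b⟩ hx
    rw [YoungDiagram.mem_cells, YoungDiagram.mem_iff_lt_rowLen] at hx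
    by_contra hcon
    rw [rowLen_eq_zero hμ (by simpa using hcon)] at hx
    omega
  rw [Finset.card_eq_sum_card_fiberwise hmaps]
  refine Finset.sum_congr rfl fun t _ => ?_
  rw [YoungDiagram.rowLen_eq_card]
  rfl

lemma sum_maya (μ : YoungDiagram) (N : ℕ) :
    ∑ p ∈ maya μ N, p = ∑ t ∈ Finset.range N, pos μ N t := by
  unfold maya
  rw [Finset.sum_image]
  intro a _ b _ hab
  exact pos_inj.1 hab

/-- The size of a skew shape is the total displacement of the particles. -/
lemma card_skew_eq {μ ν : YoungDiagram} {N : ℕ} (hμ : μ.rowLen N = 0) (hν : ν.rowLen N = 0)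
    (h : μ ≤ ν) :
    ((ν.cells \ μ.cells).card : ℤ) = ∑ p ∈ maya ν N, p - ∑ p ∈ maya μ N, p := by
  rw [Finset.cast_card_sdiff (YoungDiagram.cells_subset_iff.2 h), card_cells_eq_sum hμ,
    card_cells_eq_sum hν, sum_maya, sum_maya]
  simp only [pos, Finset.sum_sub_distrib, Finset.sum_add_distrib]
  push_cast
  ring

/-! ### Adding a ribbon moves one particle -/

/-- `ν / μ` occupies exactly the rows `i, …, j`, and each of these rows but the last
overlaps the next one in exactly one column: the row-by-row description of a ribbon. -/
structure RowRibbon (μ ν : YoungDiagram) (i j : ℕ) : Prop where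
  le : i ≤ j
  above : ∀ t, t < i → ν.rowLen t = μ.rowLen t
  below : ∀ t, j < t → ν.rowLen t = μ.rowLen t
  overlap : ∀ t, i ≤ t → t < j → ν.rowLen (t + 1) = μ.rowLen t + 1
  first : μ.rowLen i < ν.rowLen i

namespace RowRibbon

variable {μ ν : YoungDiagram} {i j : ℕ}

lemma lt_of_mem (h : RowRibbon μ ν i j) {t : ℕ} (h1 : i ≤ t) (h2 : t ≤ j) :
    μ.rowLen t < ν.rowLen t := by
  rcases Nat.eq_or_lt_of_le h1 with rfl | h1
  · exact h.first
  · obtain ⟨u, rfl⟩ : ∃ u, t = u + 1 := ⟨t - 1, by omega⟩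
    have := h.overlap u (by omega) (by omega)
    have := μ.rowLen_anti u (u + 1) (by omega)
    omega

lemma subset (h : RowRibbon μ ν i j) : μ ≤ ν := by
  apply le_of_rowLen_le
  intro t
  by_cases h1 : t < i
  · exact (h.above t h1).ge
  by_cases h2 : j < t
  · exact (h.below t h2).ge
  · exact (h.lt_of_mem (by omega) (by omega)).le

lemma row_of_mem (h : RowRibbon μ ν i j) {t c : ℕ} (hx : (t, c) ∈ ν.cells \ μ.cells) :
    i ≤ t ∧ t ≤ j := by
  rw [mem_skew_iff] at hx
  constructor
  · by_contra! hlt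
    have := h.above t hlt
    omega
  · by_contra! hlt
    have := h.below t hlt
    omega

lemma last_lt (h : RowRibbon μ ν i j) {N : ℕ} (hν : ν.rowLen N = 0) : j < N := by
  by_contra! hle
  have := h.lt_of_mem h.le le_rfl
  have := rowLen_eq_zero hν hle
  omega

/-- The particle of row `j` jumps over those of rows `i, …, j - 1`. -/
lemma maya_eq (h : RowRibbon μ ν i j) {N : ℕ} (hν : ν.rowLen N = 0) :
    maya ν N = insert (pos ν N i) ((maya μ N).erase (pos μ N j)) := by
  have hj := h.last_lt hν
  have hij := h.le
  ext p
  simp only [Finset.mem_insert, Finset.mem_erase, mem_maya]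
  constructor
  · rintro ⟨t, ht, rfl⟩
    rcases lt_trichotomy t i with hti | rfl | hti
    · right
      have e : pos ν N t = pos μ N t := by simp only [pos, h.above t hti]
      rw [e]
      exact ⟨by rw [Ne, pos_inj]; omega, t, ht, rfl⟩
    · exact Or.inl rfl
    · right
      by_cases htj : t ≤ j
      · obtain ⟨u, rfl⟩ : ∃ u, t = u + 1 := ⟨t - 1, by omega⟩
        have e : pos ν N (u + 1) = pos μ N u := by
          simp only [pos, h.overlap u (by omega) (by omega)]
          push_cast; ring
        rw [e]
        exact ⟨by rw [Ne, pos_inj]; omega, u, by omega, rfl⟩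
      · have e : pos ν N t = pos μ N t := by simp only [pos, h.below t (by omega)]
        rw [e]
        exact ⟨by rw [Ne, pos_inj]; omega, t, ht, rfl⟩
  · rintro (rfl | ⟨hne, t, ht, rfl⟩)
    · exact ⟨i, by omega, rfl⟩
    · rw [Ne, pos_inj] at hne
      by_cases h1 : t < i
      · exact ⟨t, ht, by simp only [pos, h.above t h1]⟩
      by_cases h2 : j < t
      · exact ⟨t, ht, by simp only [pos, h.below t h2]⟩
      · refine ⟨t + 1, by omega, ?_⟩
        simp only [pos, h.overlap t (by omega) (by omega)]
        push_cast; ring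

lemma target_notMem (h : RowRibbon μ ν i j) {N : ℕ} : pos ν N i ∉ maya μ N := by
  rw [mem_maya]
  rintro ⟨t, ht, hp⟩
  have h1 := h.first
  by_cases hti : t < i
  · have h2 := (pos_strictAnti ν N) hti
    have h3 := h.above t hti
    simp only [pos] at *
    omega
  · have h2 := (pos_strictAnti μ N).antitone (show i ≤ t by omega)
    simp only [pos] at *
    omega

lemma source_lt (h : RowRibbon μ ν i j) {N : ℕ} : pos μ N j < pos ν N i := by
  have h2 := (pos_strictAnti μ N).antitone h.le
  have h1 := h.first
  simp only [pos] at *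
  omega

lemma card_eq (h : RowRibbon μ ν i j) {N : ℕ} (hμ : μ.rowLen N = 0) (hν : ν.rowLen N = 0) :
    ((ν.cells \ μ.cells).card : ℤ) = pos ν N i - pos μ N j := by
  have hmem : pos μ N j ∈ maya μ N := mem_maya.2 ⟨j, h.last_lt hν, rfl⟩
  have hnot : pos ν N i ∉ (maya μ N).erase (pos μ N j) := fun hc =>
    h.target_notMem (Finset.mem_of_mem_erase hc)
  rw [card_skew_eq hμ hν h.subset, h.maya_eq hν, Finset.sum_insert hnot,
    ← Finset.add_sum_erase _ _ hmem]
  ring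

/-- The spin of a ribbon counts the particles jumped over. -/
lemma spin_eq (h : RowRibbon μ ν i j) {N : ℕ} (hν : ν.rowLen N = 0) :
    spin (ν.cells \ μ.cells) =
      ((Finset.Ioo (pos μ N j) (pos ν N i)).filter (· ∈ maya μ N)).card := by
  have hj := h.last_lt hν
  have hij := h.le
  have himg : (ν.cells \ μ.cells).image Prod.fst = Finset.Icc i j := by
    ext t
    simp only [Finset.mem_image, Finset.mem_Icc]
    constructor
    · rintro ⟨⟨a, b⟩, hx, rfl⟩
      exact h.row_of_mem hx
    · rintro ⟨h1, h2⟩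
      exact ⟨(t, μ.rowLen t), (mem_skew_iff _ _ _ _).2 ⟨le_rfl, h.lt_of_mem h1 h2⟩, rfl⟩
  have hset : (Finset.Ioo (pos μ N j) (pos ν N i)).filter (· ∈ maya μ N) =
      (Finset.Ico i j).image (pos μ N) := by
    ext p
    simp only [Finset.mem_filter, Finset.mem_Ioo, Finset.mem_image, Finset.mem_Ico, mem_maya]
    constructor
    · rintro ⟨⟨h1, h2⟩, t, ht, rfl⟩
      refine ⟨t, ⟨?_, (pos_strictAnti μ N).lt_iff_gt.1 h1⟩, rfl⟩
      by_contra! hti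
      have h3 := (pos_strictAnti ν N) hti
      have h4 := h.above t hti
      simp only [pos] at *
      omega
    · rintro ⟨t, ⟨h1, h2⟩, rfl⟩
      refine ⟨⟨pos_strictAnti μ N h2, ?_⟩, t, by omega, rfl⟩
      have h3 := (pos_strictAnti μ N).antitone h1
      have h4 := h.first
      simp only [pos] at *
      omega
  rw [hset, Finset.card_image_of_injective _ (pos_strictAnti μ N).injective, spin, himg]
  simp
  omega

lemma head_eq (h : RowRibbon μ ν i j) {N : ℕ} :
    cont (topRight (ν.cells \ μ.cells)) + 1 + N = pos ν N i := by
  have hfirst := h.first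
  have hmem : (i, ν.rowLen i - 1) ∈ ν.cells \ μ.cells := by
    rw [mem_skew_iff]; omega
  obtain ⟨h1, h2, h3⟩ := topRight_spec ⟨_, hmem⟩
  have h4 := h2 _ hmem
  generalize topRight (ν.cells \ μ.cells) = x at *
  obtain ⟨a, b⟩ := x
  have h5 := h.row_of_mem h1
  obtain rfl : a = i := by simp only at h4; omega
  have h6 := h3 _ hmem rfl
  rw [mem_skew_iff] at h1
  simp only [cont, pos] at *
  omega

lemma isRibbon (h : RowRibbon μ ν i j) : IsRibbon (ν.cells \ μ.cells).card (ν.cells \ μ.cells) := by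
  have hfirst := h.first
  refine ⟨rfl, ⟨μ, ν, h.subset, rfl⟩, ?_, ?_⟩
  · -- every cell is joined to the head `(i, ν_i - 1)` by going right, and up at row ends
    set s := ν.cells \ μ.cells with hs
    have key : ∀ k t b, ν.rowLen i + t ≤ k + b → (t, b) ∈ s →
        Relation.ReflTransGen (fun a b => a ∈ s ∧ b ∈ s ∧ Adj a b) (t, b)
          (i, ν.rowLen i - 1) := by
      intro k
      induction k with
      | zero =>
        intro t b hk hx
        have h1 := h.row_of_mem hx
        have h2 := (mem_skew_iff _ _ _ _).1 hx
        have h3 := ν.rowLen_anti i t h1.1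
        omega
      | succ k ih =>
        intro t b hk hx
        have h1 := h.row_of_mem hx
        have h2 := (mem_skew_iff _ _ _ _).1 hx
        by_cases hb : b + 1 < ν.rowLen t
        · have hy : (t, b + 1) ∈ s := by rw [hs, mem_skew_iff]; omega
          exact Relation.ReflTransGen.head ⟨hx, hy, by simp [Adj]⟩ (ih t (b + 1) (by omega) hy)
        · rcases Nat.eq_or_lt_of_le h1.1 with hti | hti
          · subst hti
            have : b = ν.rowLen i - 1 := by omega
            rw [this]
          · obtain ⟨u, rfl⟩ : ∃ u, t = u + 1 := ⟨t - 1, by omega⟩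
            have h3 := h.overlap u (by omega) (by omega)
            have h4 := ν.rowLen_anti u (u + 1) (by omega)
            have hy : (u, b) ∈ s := by rw [hs, mem_skew_iff]; omega
            exact Relation.ReflTransGen.head ⟨hx, hy, by simp [Adj]⟩ (ih u b (by omega) hy)
    have hsymm : Std.Symm (fun a b => a ∈ s ∧ b ∈ s ∧ Adj a b) := by
      constructor
      rintro a b ⟨h1, h2, h3⟩
      refine ⟨h2, h1, ?_⟩
      simp only [Adj] at *
      omega
    rintro ⟨a, b⟩ hc ⟨a', b'⟩ hd
    refine (key (ν.rowLen i + a) a b (by omega) hc).trans ?_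
    have := key (ν.rowLen i + a') a' b' (by omega) hd
    exact Std.Symm.symm _ _ this
  · rintro a b ⟨h1, h2, h3, h4⟩
    have r1 := h.row_of_mem h1
    have r2 := h.row_of_mem h2
    rw [mem_skew_iff] at h1 h4
    have := h.overlap a (by omega) (by omega)
    omega

end RowRibbon

/-- Every ribbon has a row-by-row description. -/
lemma exists_rowRibbon {n : ℕ} (hn : 1 ≤ n) {μ ν : YoungDiagram} (hμν : μ ≤ ν)
    (hr : IsRibbon n (ν.cells \ μ.cells)) : ∃ i j, RowRibbon μ ν i j := by
  have hne := ribbon_nonempty hn hr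
  obtain ⟨x, hx, hxmin⟩ := Finset.exists_min_image _ Prod.fst hne
  obtain ⟨y, hy, hymax⟩ := Finset.exists_max_image _ Prod.fst hne
  have hle := rowLen_le_of_le hμν
  have hempty : ∀ t, (∀ c, (t, c) ∉ ν.cells \ μ.cells) → ν.rowLen t = μ.rowLen t := by
    intro t ht
    have h1 := ht (μ.rowLen t)
    rw [mem_skew_iff] at h1
    have := hle t
    omega
  refine ⟨x.1, y.1, hxmin y hy, ?_, ?_, ?_, ?_⟩
  · intro t ht
    apply hempty
    intro c hc
    have := hxmin _ hc
    simp only at this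
    omega
  · intro t ht
    apply hempty
    intro c hc
    have := hymax _ hc
    simp only at this
    omega
  · intro t h1 h2
    obtain ⟨c, hc1, hc2⟩ := path_cross_row (hr.2.2.1 y hy x hx) h2 h1
    have h22 := hr.2.2.2 t (μ.rowLen t)
    have a1 := ν.rowLen_anti t (t + 1) (by omega)
    have a2 := μ.rowLen_anti t (t + 1) (by omega)
    simp only [mem_skew_iff] at hc1 hc2 h22
    omega
  · have h1 := (mem_skew_iff μ ν x.1 x.2).1 hx
    omega

/-- The data of one jump: the particle at `c` of `μ` moves to the empty site `c + n`,
producing `ν`, and the corresponding ribbon is `ν / μ`. -/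
structure Jump (n N : ℕ) (μ ν : YoungDiagram) (c : ℤ) : Prop where
  subset : μ ≤ ν
  ribbon : IsRibbon n (ν.cells \ μ.cells)
  source : c ∈ maya μ N
  target : c + n ∉ maya μ N
  maya_eq : maya ν N = insert (c + n) ((maya μ N).erase c)
  spin_eq : spin (ν.cells \ μ.cells) =
    ((Finset.Ioo c (c + n)).filter (· ∈ maya μ N)).card
  head_eq : cont (topRight (ν.cells \ μ.cells)) + 1 + N = c + n

lemma RowRibbon.jump {n N : ℕ} {μ ν : YoungDiagram} {i j : ℕ} (h : RowRibbon μ ν i j)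
    (hμ : μ.rowLen N = 0) (hν : ν.rowLen N = 0) (hcard : pos ν N i = pos μ N j + n) :
    Jump n N μ ν (pos μ N j) := by
  have hc := h.card_eq hμ hν
  have hcn : (ν.cells \ μ.cells).card = n := by omega
  refine ⟨h.subset, ?_, mem_maya.2 ⟨j, h.last_lt hν, rfl⟩, ?_, ?_, ?_, ?_⟩
  · have := h.isRibbon
    rwa [hcn] at this
  · rw [← hcard]; exact h.target_notMem
  · rw [← hcard]; exact h.maya_eq hν
  · rw [← hcard]; exact h.spin_eq hν
  · rw [← hcard]; exact h.head_eq

lemma jump_of_ribbon {n N : ℕ} (hn : 1 ≤ n) {μ ν : YoungDiagram} (hμν : μ ≤ ν)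
    (hν : ν.rowLen N = 0) (hr : IsRibbon n (ν.cells \ μ.cells)) : ∃ c, Jump n N μ ν c := by
  obtain ⟨i, j, h⟩ := exists_rowRibbon hn hμν hr
  have hμ : μ.rowLen N = 0 := by have := rowLen_le_of_le hμν N; omega
  have hc := h.card_eq hμ hν
  rw [hr.1] at hc
  exact ⟨_, h.jump hμ hν (by omega)⟩

/-- The Young diagram with prescribed row lengths. -/
lemma exists_youngDiagram {f : ℕ → ℕ} (hf : Antitone f) {N : ℕ} (hN : f N = 0) :
    ∃ ν : YoungDiagram, ∀ t, ν.rowLen t = f t := by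
  let ν : YoungDiagram :=
    { cells := (Finset.range N ×ˢ Finset.range (f 0)).filter fun x => x.2 < f x.1
      isLowerSet := by
        rintro ⟨a, b⟩ ⟨a', b'⟩ hle hx
        obtain ⟨h1, h2⟩ := Prod.mk_le_mk.1 hle
        have h3 := hf h1
        simp only [Finset.coe_filter, Finset.mem_product, Finset.mem_range,
          Set.mem_ofPred_eq] at *
        omega }
  refine ⟨ν, fun t => ?_⟩
  have hmem : ∀ b, (t, b) ∈ ν ↔ b < f t := by
    intro b
    rw [← YoungDiagram.mem_cells]
    simp only [ν, Finset.mem_filter, Finset.mem_product, Finset.mem_range]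
    constructor
    · exact fun h => h.2
    · intro h
      refine ⟨⟨?_, lt_of_lt_of_le h (hf (Nat.zero_le t))⟩, h⟩
      by_contra! hle
      have := hf hle
      omega
  have h1 := hmem (f t)
  have h2 := hmem (ν.rowLen t)
  rw [YoungDiagram.mem_iff_lt_rowLen] at h1 h2
  omega

/-- Any particle may jump `n` sites to the right onto an empty site, and this adds an
`n`-ribbon. -/
lemma exists_jump {n N : ℕ} (hn : 1 ≤ n) {μ : YoungDiagram} (hμ : μ.rowLen N = 0) {c : ℤ}
    (hc : c ∈ maya μ N) (hcn : c + n ∉ maya μ N) :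
    ∃ ν : YoungDiagram, ν.rowLen N = 0 ∧ Jump n N μ ν c := by
  classical
  obtain ⟨j, hj, rfl⟩ := mem_maya.1 hc
  have hex : ∃ t, pos μ N t < pos μ N j + n := ⟨j, by omega⟩
  -- `i` is the row in which the jumping particle lands
  obtain ⟨i, hi, hmin⟩ : ∃ i, pos μ N i < pos μ N j + n ∧
      ∀ t, t < i → pos μ N j + n < pos μ N t := by
    refine ⟨Nat.find hex, Nat.find_spec hex, fun t ht => ?_⟩
    have h1 := Nat.find_min hex ht
    have h2 : pos μ N t ≠ pos μ N j + n := fun he =>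
      hcn (mem_maya.2 ⟨t, by
        have : Nat.find hex ≤ j := Nat.find_min' hex (by omega)
        omega, he⟩)
    omega
  have hij : i ≤ j := by
    by_contra! hlt
    have := hmin j hlt
    omega
  obtain ⟨e, he⟩ : ∃ e : ℕ, (e : ℤ) + N - i = pos μ N j + n := by
    refine ⟨(pos μ N j + n - N + i).toNat, ?_⟩
    have : 0 ≤ pos μ N j + n - N + i := by
      simp only [pos] at hi ⊢
      omega
    omega
  have hei : μ.rowLen i < e := by simp only [pos] at hi he; omega
  let f : ℕ → ℕ := fun t => if t < i then μ.rowLen t else if t = i then e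
    else if t ≤ j then μ.rowLen (t - 1) + 1 else μ.rowLen t
  have hf : Antitone f := by
    apply antitone_nat_of_succ_le
    intro t
    have a1 := μ.rowLen_anti t (t + 1) (by omega)
    have a2 := μ.rowLen_anti (t - 1) t (by omega)
    have a3 : t + 1 = i → e ≤ μ.rowLen t := by
      intro h
      have := hmin t (by omega)
      simp only [pos] at this he
      omega
    simp only [f]
    by_cases h1 : t + 1 < i
    · rw [if_pos h1, if_pos (by omega)]; exact a1
    by_cases h2 : t + 1 = i
    · rw [if_neg h1, if_pos h2, if_pos (by omega)]; exact a3 h2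
    rw [if_neg h1, if_neg h2, if_neg (show ¬ t < i by omega), Nat.add_sub_cancel]
    by_cases h3 : t = i
    · subst h3
      rw [if_pos rfl]
      split_ifs <;> omega
    · rw [if_neg h3]
      split_ifs <;> omega
  have hfN : f N = 0 := by
    simp only [f]
    rw [if_neg (by omega), if_neg (by omega), if_neg (by omega), hμ]
  obtain ⟨ν, hν⟩ := exists_youngDiagram hf hfN
  have hνN : ν.rowLen N = 0 := by rw [hν, hfN]
  have hνi : ν.rowLen i = e := by rw [hν]; simp [f]
  refine ⟨ν, hνN, ?_⟩
  have hR : RowRibbon μ ν i j := by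
    refine ⟨hij, ?_, ?_, ?_, ?_⟩
    · intro t ht
      rw [hν]; simp only [f]; rw [if_pos ht]
    · intro t ht
      rw [hν]; simp only [f]
      rw [if_neg (by omega), if_neg (by omega), if_neg (by omega)]
    · intro t h1 h2
      rw [hν]; simp only [f]
      rw [if_neg (by omega), if_neg (by omega), if_pos (by omega), Nat.add_sub_cancel]
    · omega
  refine hR.jump hμ hνN ?_
  simp only [pos] at he ⊢
  omega

end SuperLLT

namespace SuperLLT

/-! ### Systems of jumps -/

/-- `A` is a system of starting points of jumps of length `n` carrying the configuration
`M` to the configuration `L`, such that no particle arrives at a site of `M`; a particle may jump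
several times.  The condition at the site `c` is the one for the vertex in column `c` to be
of an admissible type other than `SE`. -/
def Valid (n : ℕ) (M L A : Finset ℤ) : Prop :=
  ∀ c : ℤ, ¬(c ∈ M ∧ c - n ∈ A) ∧ ¬(c ∈ L ∧ c ∈ A) ∧
    ((c ∈ M ∨ c - n ∈ A) ↔ (c ∈ L ∨ c ∈ A))

/-- The exponent of `q`: each jump from `a` counts the sites strictly between `a` and
`a + n` that are occupied when jumps are performed from left to right. -/
noncomputable def spinExp (n : ℕ) (M A : Finset ℤ) : ℕ :=
  ∑ a ∈ A, ((Finset.Ioo a (a + n)).filter fun p => p ∈ M ∨ p - n ∈ A).card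

/-- The conservation law determines the jumps site by site from the left. -/
lemma Valid.unique {n : ℕ} (hn : 1 ≤ n) {M L A B : Finset ℤ} (hA : Valid n M L A)
    (hB : Valid n M L B) : A = B := by
  by_contra hne
  have hsd : (symmDiff A B).Nonempty := by
    rw [Finset.nonempty_iff_ne_empty, Ne, ← Finset.bot_eq_empty, symmDiff_eq_bot]
    exact hne
  -- the leftmost disagreement contradicts the conservation law at that site
  obtain ⟨c, hc, hmin⟩ := Finset.exists_min_image _ id hsd
  have hagree : c - n ∈ A ↔ c - n ∈ B := by
    by_contra hcon
    have : c - n ∈ symmDiff A B := by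
      rw [Finset.mem_symmDiff]; tauto
    have := hmin _ this
    simp only [id] at this
    omega
  obtain ⟨-, a1, a2⟩ := hA c
  obtain ⟨-, b1, b2⟩ := hB c
  rw [hagree] at a2
  have hiff : c ∈ A ↔ c ∈ B := by
    clear hmin hagree hc hne hsd hA hB
    by_cases hL : c ∈ L
    · simp only [hL, true_and] at a1 b1
      simp only [a1, b1]
    · simp only [hL, false_or] at a2 b2
      rw [← a2, ← b2]
  rw [Finset.mem_symmDiff, hiff] at hc
  rcases hc with hc | hc <;> exact hc.2 hc.1

lemma Valid.eq_of_empty {n : ℕ} {M L : Finset ℤ} (h : Valid n M L ∅) : M = L := by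
  ext c
  have := (h c).2.2
  simpa using this

lemma valid_self {n : ℕ} (M : Finset ℤ) : Valid n M M ∅ := by
  intro c; simp

/-- The leftmost jump may be performed first. -/
lemma valid_insert_iff {n : ℕ} (hn : 1 ≤ n) {M M' L A : Finset ℤ} {c : ℤ} (hc : c ∈ M)
    (hcn : c + n ∉ M) (hM' : M' = insert (c + n) (M.erase c)) (hA : ∀ a ∈ A, c < a) :
    Valid n M L (insert c A) ↔ Valid n M' L A := by
  have hcA : c ∉ A := fun h => lt_irrefl _ (hA c h)
  have hcnA : c - n ∉ A := fun h => by have := hA _ h; omega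
  have hn0 : n ≠ 0 := by omega
  refine forall_congr' fun p => ?_
  subst hM'
  simp only [Finset.mem_insert, Finset.mem_erase]
  by_cases h1 : p = c
  · subst h1
    simp [hc, hcA, hcnA, hn0]
  · by_cases h2 : p = c + n
    · subst h2
      have e : c + n - n = c := by ring
      simp [e, hcn, hcA, hn0]
    · have e : p - n ≠ c := by omega
      simp [h1, h2, e]

lemma spinExp_insert {n : ℕ} {M M' A : Finset ℤ} {c : ℤ}
    (hM' : M' = insert (c + n) (M.erase c)) (hA : ∀ a ∈ A, c < a) :
    spinExp n M (insert c A) =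
      ((Finset.Ioo c (c + n)).filter (· ∈ M)).card + spinExp n M' A := by
  have hcA : c ∉ A := fun h => lt_irrefl _ (hA c h)
  unfold spinExp
  rw [Finset.sum_insert hcA]
  congr 1
  · congr 1
    ext p
    simp only [Finset.mem_filter, Finset.mem_Ioo, Finset.mem_insert]
    constructor
    · rintro ⟨h1, h2 | h2 | h2⟩
      · exact ⟨h1, h2⟩
      · omega
      · have := hA _ h2
        omega
    · rintro ⟨h1, h2⟩
      exact ⟨h1, Or.inl h2⟩
  · refine Finset.sum_congr rfl fun a ha => ?_
    have hca := hA a ha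
    congr 1
    ext p
    simp only [Finset.mem_filter, Finset.mem_Ioo, Finset.mem_insert, hM', Finset.mem_erase]
    refine and_congr_right fun hp => ?_
    have h1 : p ≠ c := by omega
    have h2 : p - n = c ↔ p = c + n := by omega
    simp [h1, h2]
    tauto

/-! ### Removing and adding the leftmost ribbon of a horizontal strip -/

lemma mem_of_tile {n : ℕ} {cells : Finset (ℕ × ℕ)} {T : Finset (Finset (ℕ × ℕ))}
    (hT : IsTilingOf n cells T) {t : Finset (ℕ × ℕ)} (ht : t ∈ T) {x : ℕ × ℕ} (hx : x ∈ t) :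
    x ∈ cells := by
  rw [← hT.2.2]
  exact Finset.mem_sup.2 ⟨t, ht, hx⟩

lemma exists_tile {n : ℕ} {cells : Finset (ℕ × ℕ)} {T : Finset (Finset (ℕ × ℕ))}
    (hT : IsTilingOf n cells T) {x : ℕ × ℕ} (hx : x ∈ cells) : ∃ t ∈ T, x ∈ t := by
  rw [← hT.2.2] at hx
  exact Finset.mem_sup.1 hx

/-- In a skew shape, a cell on the northern boundary is the first cell of its diagonal. -/
lemma not_mem_northWest {s : Finset (ℕ × ℕ)} (hs : IsSkewCells s) {h z : ℕ × ℕ} (hh : h ∈ s)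
    (hz : z ∈ s) (hnorth : TouchesNorth s h) (hcont : cont z = cont h) : h.1 ≤ z.1 := by
  by_contra! hlt
  obtain ⟨a, b⟩ := h
  obtain ⟨c, d⟩ := z
  simp only [cont, TouchesNorth] at *
  rcases hnorth with h0 | h0
  · omega
  · exact h0 (skew_convex hs hz hh (by omega) (by omega) (by omega) (by omega))

/-- Distinct ribbons of a horizontal strip have heads on distinct diagonals. -/
lemma head_injective {n : ℕ} (hn : 1 ≤ n) {s : Finset (ℕ × ℕ)} (hs : IsSkewCells s)
    {T : Finset (Finset (ℕ × ℕ))} (hT : IsHorizontalTiling n s T) {t t' : Finset (ℕ × ℕ)}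
    (ht : t ∈ T) (ht' : t' ∈ T) (h : cont (topRight t) = cont (topRight t')) : t = t' := by
  by_contra hne
  have m := (topRight_spec (ribbon_nonempty hn (hT.1.1 t ht))).1
  have hm2 := (topRight_spec (ribbon_nonempty hn (hT.1.1 t' ht'))).1
  have k := mem_of_tile hT.1 ht m
  have k' := mem_of_tile hT.1 ht' hm2
  have h1 := not_mem_northWest hs k k' (hT.2 t ht) h.symm
  have h2 := not_mem_northWest hs k' k (hT.2 t' ht') h
  have he : topRight t = topRight t' := by
    simp only [cont] at h
    ext <;> omega
  rw [← he] at hm2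
  exact Finset.disjoint_left.1 (hT.1.2.1 t ht t' ht' hne) m hm2

/-- If `t'` has a cell strictly north-west of a cell of `t` on the same diagonal, and reaches a
diagonal beyond that of a later cell `h` of `t`, then `t'` stays strictly north-west of `t` up
to the diagonal of `h`: the two disjoint ribbons cannot cross. -/
lemma northWest_propagates {n : ℕ} {t t' : Finset (ℕ × ℕ)} (ht : IsRibbon n t)
    (ht' : IsRibbon n t') (hdisj : Disjoint t t') {h h' : ℕ × ℕ} (hh : h ∈ t) (hh' : h' ∈ t')
    (hlt : cont h < cont h') (k : ℕ) :
    ∀ x ∈ t, ∀ z ∈ t', cont x = cont z → z.1 < x.1 → cont h = cont x + k →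
      ∃ w ∈ t', cont w = cont h ∧ w.1 < h.1 := by
  induction k with
  | zero =>
    intro x hx z hz hxz hzx hk
    obtain rfl := ribbon_diag_unique ht hx hh (by omega)
    exact ⟨z, hz, hxz.symm, hzx⟩
  | succ k ih =>
    rintro ⟨x1, x2⟩ hx ⟨z1, z2⟩ hz hxz hzx hk
    have sx := ribbon_step ht hx hh (by omega)
    have sz := ribbon_step ht' hz hh' (by omega)
    simp only [cont] at hxz hk hzx
    rcases sx with sx | ⟨r, hr, sx⟩ <;> rcases sz with sz | ⟨r', hr', sz⟩ <;>
      simp only at * <;>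
      refine ih _ sx _ sz ?_ ?_ ?_ <;> simp only [cont] <;> try omega
    -- the remaining case: `t` goes up and `t'` goes right, and the two cells must differ
    by_contra! hcon
    refine Finset.disjoint_left.1 hdisj sx ?_
    convert sz using 2 <;> omega

/-- Adding to `μ` the ribbon of a horizontal strip with the leftmost head gives a
partition. -/
lemma lowerSet_union {n : ℕ} (hn : 1 ≤ n) {μ lam : YoungDiagram} (hμ : μ ≤ lam)
    {T : Finset (Finset (ℕ × ℕ))} (hT : IsHorizontalTiling n (lam.cells \ μ.cells) T)
    {t : Finset (ℕ × ℕ)} (ht : t ∈ T)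
    (hmin : ∀ t' ∈ T, t' ≠ t → cont (topRight t) < cont (topRight t')) :
    IsLowerSet ((μ.cells ∪ t : Finset (ℕ × ℕ)) : Set (ℕ × ℕ)) := by
  have hsk : IsSkewCells (lam.cells \ μ.cells) := ⟨μ, lam, hμ, rfl⟩
  have hrt := hT.1.1 t ht
  have hhead := (topRight_spec (ribbon_nonempty hn hrt)).1
  have hheadcells := mem_of_tile hT.1 ht hhead
  -- no other ribbon has a cell strictly north-west of a cell of `t` on the same diagonal
  have clash : ∀ t' ∈ T, t' ≠ t → ∀ x ∈ t, ∀ z ∈ t', cont x = cont z → z.1 < x.1 → False := by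
    intro t' ht' hne x hx z hz hxz hzx
    have hrt' := hT.1.1 t' ht'
    have hhead' := (topRight_spec (ribbon_nonempty hn hrt')).1
    obtain ⟨k, hk⟩ := Int.eq_ofNat_of_zero_le
      (sub_nonneg.2 (ribbon_cont_le_head hn hrt hx))
    obtain ⟨w, hw, hwc, hwl⟩ := northWest_propagates hrt hrt'
      (hT.1.2.1 t ht t' ht' hne.symm) hhead hhead' (hmin t' ht' hne) k x hx z hz hxz hzx
      (by omega)
    have := not_mem_northWest hsk hheadcells (mem_of_tile hT.1 ht' hw) (hT.2 t ht) hwc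
    omega
  have hsub : ∀ x ∈ t, x ∈ lam := fun x hx =>
    (YoungDiagram.mem_cells _).1 (Finset.mem_sdiff.1 (mem_of_tile hT.1 ht hx)).1
  -- the cell above a cell of `t`
  have up : ∀ a b, (a + 1, b) ∈ t → (a, b) ∈ μ.cells ∪ t := by
    intro a b hx
    by_contra hcon
    rw [Finset.mem_union, not_or] at hcon
    have hlam : (a, b) ∈ lam := lam.up_left_mem (by omega) le_rfl (hsub _ hx)
    have hcell : (a, b) ∈ lam.cells \ μ.cells :=
      Finset.mem_sdiff.2 ⟨(YoungDiagram.mem_cells _).2 hlam, hcon.1⟩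
    obtain ⟨t', ht', hy⟩ := exists_tile hT.1 hcell
    have hne : t' ≠ t := by rintro rfl; exact hcon.2 hy
    by_cases hlt : cont (a + 1, b) < cont (topRight t)
    · rcases ribbon_step hrt hx hhead hlt with h | ⟨r, hr, h⟩
      · exact clash t' ht' hne _ h _ hy (by simp only [cont]; push_cast; ring) (by simp)
      · obtain rfl : a = r := by simp only at hr; omega
        exact hcon.2 h
    · have he := ribbon_diag_unique hrt hx hhead
        (le_antisymm (ribbon_cont_le_head hn hrt hx) (by omega))
      have := hT.2 t ht
      rw [← he] at this
      rcases this with h0 | h0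
      · simp at h0
      · exact h0 hcell
  -- the cell to the left of a cell of `t`
  have left : ∀ a b, (a, b + 1) ∈ t → (a, b) ∈ μ.cells ∪ t := by
    intro a b hx
    by_contra hcon
    rw [Finset.mem_union, not_or] at hcon
    have hlam : (a, b) ∈ lam := lam.up_left_mem le_rfl (by omega) (hsub _ hx)
    have hcell : (a, b) ∈ lam.cells \ μ.cells :=
      Finset.mem_sdiff.2 ⟨(YoungDiagram.mem_cells _).2 hlam, hcon.1⟩
    obtain ⟨t', ht', hy⟩ := exists_tile hT.1 hcell
    have hne : t' ≠ t := by rintro rfl; exact hcon.2 hy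
    have hrt' := hT.1.1 t' ht'
    have hhead' := (topRight_spec (ribbon_nonempty hn hrt')).1
    have hlt : cont (a, b) < cont (topRight t') := by
      have h1 := ribbon_cont_le_head hn hrt hx
      have h2 := hmin t' ht' hne
      simp only [cont] at *
      omega
    rcases ribbon_step hrt' hy hhead' hlt with h | ⟨r, hr, h⟩
    · exact Finset.disjoint_left.1 (hT.1.2.1 t ht t' ht' hne.symm) hx h
    · simp only at hr h
      subst hr
      exact clash t' ht' hne _ hx _ h (by simp only [cont]; push_cast; ring) (by simp)
  have key : ∀ k a b a' b', a' + b' + k = a + b → a' ≤ a → b' ≤ b →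
      (a, b) ∈ μ.cells ∪ t → (a', b') ∈ μ.cells ∪ t := by
    intro k
    induction k with
    | zero =>
      intro a b a' b' hk ha hb hx
      obtain rfl : a' = a := by omega
      obtain rfl : b' = b := by omega
      exact hx
    | succ k ih =>
      intro a b a' b' hk ha hb hx
      rcases Finset.mem_union.1 hx with hx | hx
      · exact Finset.mem_union_left _ (μ.up_left_mem ha hb hx)
      · by_cases hlt : a' < a
        · obtain ⟨u, rfl⟩ : ∃ u, a = u + 1 := ⟨a - 1, by omega⟩
          exact ih u b a' b' (by omega) (by omega) hb (up u b hx)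
        · obtain ⟨u, rfl⟩ : ∃ u, b = u + 1 := ⟨b - 1, by omega⟩
          exact ih a u a' b' (by omega) ha (by omega) (left a u hx)
  rintro ⟨a, b⟩ ⟨a', b'⟩ hle hx
  obtain ⟨h1, h2⟩ := Prod.mk_le_mk.1 hle
  rw [Finset.mem_coe] at hx ⊢
  exact key (a + b - a' - b') a b a' b' (by omega) h1 h2 hx

/-- Removing the ribbon with the leftmost head from a horizontal strip. -/
lemma peel {n N : ℕ} (hn : 1 ≤ n) {μ lam : YoungDiagram} (hμ : μ ≤ lam)
    (hlam : lam.rowLen N = 0) {T : Finset (Finset (ℕ × ℕ))}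
    (hT : IsHorizontalTiling n (lam.cells \ μ.cells) T) (hne : T.Nonempty) :
    ∃ ν c, ν ≤ lam ∧ Jump n N μ ν c ∧ ν.cells \ μ.cells ∈ T ∧
      IsHorizontalTiling n (lam.cells \ ν.cells) (T.erase (ν.cells \ μ.cells)) ∧
      ∀ t' ∈ T.erase (ν.cells \ μ.cells),
        cont (topRight (ν.cells \ μ.cells)) < cont (topRight t') := by
  have hsk : IsSkewCells (lam.cells \ μ.cells) := ⟨μ, lam, hμ, rfl⟩
  obtain ⟨t, ht, hmin⟩ := Finset.exists_min_image T (fun t => cont (topRight t)) hne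
  have hmin' : ∀ t' ∈ T, t' ≠ t → cont (topRight t) < cont (topRight t') := by
    intro t' ht' hne'
    refine lt_of_le_of_ne (hmin t' ht') fun h => hne' ?_
    exact (head_injective hn hsk hT ht ht' h).symm
  let ν : YoungDiagram := ⟨μ.cells ∪ t, lowerSet_union hn hμ hT ht hmin'⟩
  have hsubt : ∀ x ∈ t, x ∈ lam.cells ∧ x ∉ μ.cells := fun x hx =>
    Finset.mem_sdiff.1 (mem_of_tile hT.1 ht hx)
  have hdiff : ν.cells \ μ.cells = t := by
    ext x
    simp only [ν, Finset.mem_sdiff, Finset.mem_union]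
    have := hsubt x
    tauto
  have hμν : μ ≤ ν := YoungDiagram.cells_subset_iff.1 Finset.subset_union_left
  have hνlam : ν ≤ lam := by
    apply YoungDiagram.cells_subset_iff.1
    exact Finset.union_subset (YoungDiagram.cells_subset_iff.2 hμ) fun x hx => (hsubt x hx).1
  have hνN : ν.rowLen N = 0 := by
    have := rowLen_le_of_le hνlam N
    omega
  obtain ⟨c, hc⟩ := jump_of_ribbon hn hμν hνN (by rw [hdiff]; exact hT.1.1 t ht)
  refine ⟨ν, c, hνlam, hc, by rwa [hdiff], ?_, ?_⟩
  · rw [hdiff]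
    refine ⟨⟨fun s hs => hT.1.1 s (Finset.mem_of_mem_erase hs), fun s hs s' hs' =>
      hT.1.2.1 s (Finset.mem_of_mem_erase hs) s' (Finset.mem_of_mem_erase hs'), ?_⟩, ?_⟩
    · ext x
      simp only [Finset.mem_sup, Finset.mem_erase, id, ν, Finset.mem_sdiff, Finset.mem_union]
      constructor
      · rintro ⟨s, ⟨hst, hs⟩, hx⟩
        have h1 := Finset.mem_sdiff.1 (mem_of_tile hT.1 hs hx)
        have h2 := Finset.disjoint_left.1 (hT.1.2.1 s hs t ht hst) hx
        tauto
      · rintro ⟨h1, h2⟩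
        rw [not_or] at h2
        obtain ⟨s, hs, hx⟩ := exists_tile hT.1 (Finset.mem_sdiff.2 ⟨h1, h2.1⟩)
        exact ⟨s, ⟨by rintro rfl; exact h2.2 hx, hs⟩, hx⟩
    · intro s hs
      rcases hT.2 s (Finset.mem_of_mem_erase hs) with h | h
      · exact Or.inl h
      · refine Or.inr fun hx => h ?_
        simp only [ν, Finset.mem_sdiff, Finset.mem_union] at hx ⊢
        tauto
  · rw [hdiff]
    intro s hs
    exact hmin' s (Finset.mem_of_mem_erase hs) (Finset.ne_of_mem_erase hs)

/-- Adding a ribbon whose head is to the left of all heads of a horizontal strip. -/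
lemma unpeel {n N : ℕ} (hn : 1 ≤ n) {μ ν lam : YoungDiagram} (hν : ν ≤ lam) {c : ℤ}
    (hJ : Jump n N μ ν c) {T : Finset (Finset (ℕ × ℕ))}
    (hT : IsHorizontalTiling n (lam.cells \ ν.cells) T)
    (hlt : ∀ t' ∈ T, cont (topRight (ν.cells \ μ.cells)) < cont (topRight t')) :
    IsHorizontalTiling n (lam.cells \ μ.cells) (insert (ν.cells \ μ.cells) T) := by
  set t := ν.cells \ μ.cells with ht
  have hsub1 := YoungDiagram.cells_subset_iff.2 hν
  have hsub2 := YoungDiagram.cells_subset_iff.2 hJ.subset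
  have hdisj : ∀ s ∈ T, Disjoint t s := by
    intro s hs
    rw [Finset.disjoint_left]
    intro x hx hxs
    exact (Finset.mem_sdiff.1 (mem_of_tile hT.1 hs hxs)).2 (Finset.mem_sdiff.1 hx).1
  have hspec := topRight_spec (s := t) (ribbon_nonempty hn hJ.ribbon)
  refine ⟨⟨?_, ?_, ?_⟩, ?_⟩
  · intro s hs
    rcases Finset.mem_insert.1 hs with rfl | hs
    · exact hJ.ribbon
    · exact hT.1.1 s hs
  · intro s hs s' hs' hne
    rcases Finset.mem_insert.1 hs with rfl | hs <;> rcases Finset.mem_insert.1 hs' with rfl | hs'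
    · exact absurd rfl hne
    · exact hdisj s' hs'
    · exact (hdisj s hs).symm
    · exact hT.1.2.1 s hs s' hs' hne
  · rw [Finset.sup_insert, hT.1.2.2]
    ext x
    have h1 := @hsub1 x
    have h2 := @hsub2 x
    simp only [id, ht, Finset.sup_eq_union, Finset.mem_union, Finset.mem_sdiff]
    tauto
  · intro s hs
    rcases Finset.mem_insert.1 hs with rfl | hs
    · by_cases h0 : (topRight t).1 = 0
      · exact Or.inl h0
      refine Or.inr fun hx => ?_
      have h1 : ((topRight t).1 - 1, (topRight t).2) ∈ ν :=
        ν.up_left_mem (Nat.sub_le _ _) le_rfl (Finset.mem_sdiff.1 hspec.1).1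
      have h2 : ((topRight t).1 - 1, (topRight t).2) ∈ t :=
        Finset.mem_sdiff.2 ⟨h1, (Finset.mem_sdiff.1 hx).2⟩
      have h3 := hspec.2.1 _ h2
      simp only at h3
      omega
    · by_cases h0 : (topRight s).1 = 0
      · exact Or.inl h0
      have hN := (hT.2 s hs).resolve_left h0
      refine Or.inr fun hx => ?_
      have h2 : ((topRight s).1 - 1, (topRight s).2) ∈ t := by
        simp only [ht, Finset.mem_sdiff] at hx hN ⊢
        tauto
      have h3 := ribbon_cont_le_head hn hJ.ribbon h2
      have h4 := hlt s hs
      simp only [← ht, cont] at h3 h4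
      omega

/-! ### Horizontal strips correspond to systems of jumps -/

lemma spin_insert {t : Finset (ℕ × ℕ)} {T : Finset (Finset (ℕ × ℕ))} (h : t ∉ T) :
    tilesSpin (insert t T) = spin t + tilesSpin T := by
  unfold tilesSpin
  rw [Finset.sum_insert h]

/-- The ribbons of `T` correspond to the jumps starting in `A`: they are equally many, the
total spins agree, and the heads of the ribbons lie on the diagonals given by the jumps. -/
def Matches (n N : ℕ) (μ : YoungDiagram) (T : Finset (Finset (ℕ × ℕ))) (A : Finset ℤ) : Prop :=
  T.card = A.card ∧ tilesSpin T = spinExp n (maya μ N) A ∧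
    T.image (fun t => cont (topRight t) + 1 + N - n) = A

lemma matches_insert {n N : ℕ} {μ ν : YoungDiagram} {c : ℤ} (hJ : Jump n N μ ν c)
    {T : Finset (Finset (ℕ × ℕ))} {A : Finset ℤ} (hM : Matches n N ν T A)
    (hA : ∀ a ∈ A, c < a) (ht : ν.cells \ μ.cells ∉ T) :
    Matches n N μ (insert (ν.cells \ μ.cells) T) (insert c A) := by
  have hcA : c ∉ A := fun h => lt_irrefl _ (hA c h)
  refine ⟨?_, ?_, ?_⟩
  · rw [Finset.card_insert_of_notMem ht, Finset.card_insert_of_notMem hcA, hM.1]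
  · rw [spin_insert ht, spinExp_insert hJ.maya_eq hA, hM.2.1, hJ.spin_eq]
  · rw [Finset.image_insert, hM.2.2, hJ.head_eq]
    congr 1
    ring

/-- Performing the jumps of a system from left to right builds a horizontal strip. -/
theorem exists_tiling_of_valid {n N : ℕ} (hn : 1 ≤ n) {lam : YoungDiagram}
    (hlam : lam.rowLen N = 0) (k : ℕ) : ∀ (μ : YoungDiagram) (A : Finset ℤ), μ.rowLen N = 0 →
      A.card = k → Valid n (maya μ N) (maya lam N) A →
      μ ≤ lam ∧ ∃ T, IsHorizontalTiling n (lam.cells \ μ.cells) T ∧ Matches n N μ T A := by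
  induction k with
  | zero =>
    intro μ A hμ hA hV
    rw [Finset.card_eq_zero] at hA
    subst hA
    obtain rfl := maya_injective hμ hlam hV.eq_of_empty
    refine ⟨le_rfl, ∅, ⟨⟨by simp, by simp, by simp⟩, by simp⟩, by simp, ?_, by simp⟩
    simp [tilesSpin, spinExp]
  | succ k ih =>
    intro μ A hμ hA hV
    obtain ⟨c, hc, hmin⟩ := Finset.exists_min_image A id
      (Finset.card_pos.1 (by omega))
    have hmin' : ∀ a ∈ A.erase c, c < a := fun a ha =>
      lt_of_le_of_ne (hmin a (Finset.mem_of_mem_erase ha)) (Finset.ne_of_mem_erase ha).symm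
    have hcM : c ∈ maya μ N := by
      have h1 : c - n ∉ A := fun h => by
        have := hmin _ h
        simp only [id] at this
        omega
      have := (hV c).2.2
      tauto
    have hcn : c + n ∉ maya μ N := by
      have := (hV (c + n)).1
      rw [show c + n - n = c by ring] at this
      tauto
    obtain ⟨ν, hν, hJ⟩ := exists_jump hn hμ hcM hcn
    rw [← Finset.insert_erase hc] at hV
    rw [valid_insert_iff hn hcM hcn hJ.maya_eq hmin'] at hV
    obtain ⟨hνlam, T, hT, hM⟩ := ih ν (A.erase c) hν
      (by rw [Finset.card_erase_of_mem hc]; omega) hV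
    have hlt : ∀ t' ∈ T, cont (topRight (ν.cells \ μ.cells)) < cont (topRight t') := by
      intro t' ht'
      have h1 : cont (topRight t') + 1 + N - n ∈ A.erase c := by
        rw [← hM.2.2]
        exact Finset.mem_image_of_mem _ ht'
      have h2 := hmin' _ h1
      have h3 := hJ.head_eq
      omega
    refine ⟨hJ.subset.trans hνlam, _, unpeel hn hνlam hJ hT hlt, ?_⟩
    rw [← Finset.insert_erase hc]
    exact matches_insert hJ hM hmin' fun h => lt_irrefl _ (hlt _ h)

/-- Removing the ribbons of a horizontal strip by increasing diagonal of the head reads off a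
system of jumps. -/
theorem exists_valid_of_tiling {n N : ℕ} (hn : 1 ≤ n) {lam : YoungDiagram}
    (hlam : lam.rowLen N = 0) (k : ℕ) : ∀ (μ : YoungDiagram) (T : Finset (Finset (ℕ × ℕ))),
      μ ≤ lam → T.card = k → IsHorizontalTiling n (lam.cells \ μ.cells) T →
      ∃ A, Valid n (maya μ N) (maya lam N) A ∧ Matches n N μ T A := by
  induction k with
  | zero =>
    intro μ T hμ hk hT
    rw [Finset.card_eq_zero] at hk
    subst hk
    have h1 : lam.cells \ μ.cells = ∅ := by rw [← hT.1.2.2]; simp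
    obtain rfl : μ = lam := le_antisymm hμ
      (YoungDiagram.cells_subset_iff.1 (Finset.sdiff_eq_empty_iff_subset.1 h1))
    exact ⟨∅, valid_self _, by simp, by simp [tilesSpin, spinExp], by simp⟩
  | succ k ih =>
    intro μ T hμ hk hT
    obtain ⟨ν, c, hνlam, hJ, hmem, hT', hlt⟩ :=
      peel hn hμ hlam hT (Finset.card_pos.1 (by omega))
    obtain ⟨A, hV, hM⟩ := ih ν _ hνlam (by rw [Finset.card_erase_of_mem hmem]; omega) hT'
    have hA : ∀ a ∈ A, c < a := by
      intro a ha
      rw [← hM.2.2] at ha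
      obtain ⟨t', ht', rfl⟩ := Finset.mem_image.1 ha
      have h1 := hlt t' ht'
      have h2 := hJ.head_eq
      omega
    refine ⟨insert c A, (valid_insert_iff hn hJ.source hJ.target hJ.maya_eq hA).2 hV, ?_⟩
    have := matches_insert hJ hM hA (Finset.notMem_erase _ _)
    rwa [Finset.insert_erase hmem] at this

/-- A skew shape has at most one horizontal ribbon strip tiling. -/
theorem tiling_unique {n N : ℕ} (hn : 1 ≤ n) {lam : YoungDiagram} (hlam : lam.rowLen N = 0)
    (k : ℕ) : ∀ (μ : YoungDiagram) (T T' : Finset (Finset (ℕ × ℕ))), μ ≤ lam → T.card = k →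
      IsHorizontalTiling n (lam.cells \ μ.cells) T →
      IsHorizontalTiling n (lam.cells \ μ.cells) T' → T = T' := by
  induction k with
  | zero =>
    intro μ T T' hμ hk hT hT'
    obtain ⟨A, hV, hM⟩ := exists_valid_of_tiling hn hlam _ μ T hμ rfl hT
    obtain ⟨A', hV', hM'⟩ := exists_valid_of_tiling hn hlam _ μ T' hμ rfl hT'
    obtain rfl := hV.unique hn hV'
    have h1 := hM.1
    have h2 := hM'.1
    rw [Finset.card_eq_zero.1 hk, eq_comm, ← Finset.card_eq_zero]
    omega
  | succ k ih =>
    intro μ T T' hμ hk hT hT'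
    obtain ⟨A, hV, hM⟩ := exists_valid_of_tiling hn hlam _ μ T hμ rfl hT
    obtain ⟨A', hV', hM'⟩ := exists_valid_of_tiling hn hlam _ μ T' hμ rfl hT'
    obtain rfl := hV.unique hn hV'
    have hcard := hM.1
    have hcard' := hM'.1
    obtain ⟨ν, c, hνlam, hJ, hmem, hE, hlt⟩ :=
      peel hn hμ hlam hT (Finset.card_pos.1 (by omega))
    obtain ⟨ν', c', hνlam', hJ', hmem', hE', hlt'⟩ :=
      peel hn hμ hlam hT' (Finset.card_pos.1 (by omega))
    -- the leftmost jump is the least element of the common jump set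
    have least : ∀ {S : Finset (Finset (ℕ × ℕ))} {κ : YoungDiagram} {d : ℤ},
        S.image (fun t => cont (topRight t) + 1 + N - n) = A →
        Jump n N μ κ d → κ.cells \ μ.cells ∈ S →
        (∀ t' ∈ S.erase (κ.cells \ μ.cells),
          cont (topRight (κ.cells \ μ.cells)) < cont (topRight t')) →
        d ∈ A ∧ ∀ a ∈ A, d ≤ a := by
      intro S κ d hS hJd hm hl
      have hd := hJd.head_eq
      rw [← hS]
      refine ⟨Finset.mem_image.2 ⟨_, hm, by omega⟩, ?_⟩
      intro a ha
      obtain ⟨s, hs, rfl⟩ := Finset.mem_image.1 ha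
      by_cases hse : s = κ.cells \ μ.cells
      · subst hse; omega
      · have := hl s (Finset.mem_erase.2 ⟨hse, hs⟩)
        omega
    have l1 := least hM.2.2 hJ hmem hlt
    have l2 := least hM'.2.2 hJ' hmem' hlt'
    obtain rfl : c = c' := le_antisymm (l1.2 _ l2.1) (l2.2 _ l1.1)
    have hνN : ν.rowLen N = 0 := by have := rowLen_le_of_le hνlam N; omega
    have hνN' : ν'.rowLen N = 0 := by have := rowLen_le_of_le hνlam' N; omega
    obtain rfl := maya_injective hνN hνN' (hJ.maya_eq.trans hJ'.maya_eq.symm)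
    have := ih ν _ _ hνlam (by rw [Finset.card_erase_of_mem hmem]; omega) hE hE'
    rw [← Finset.insert_erase hmem, ← Finset.insert_erase hmem', this]

end SuperLLT

namespace SuperLLT

/-! ### States of the one-row model -/

/-- The labels around a vertex of nonzero weight: the tuple is shifted, and one of the five
types other than `SE` occurs. -/
def VertexGood (n : ℕ) (hn : 0 < n) (vN vS : Bool) (vW vE : Fin n → Bool) : Prop :=
  (∀ k : Fin n, ∀ hk : k.val + 1 < n, vE k = vW ⟨k.val + 1, hk⟩) ∧
    ¬(vN = true ∧ vW ⟨0, hn⟩ = true) ∧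
    ¬(vS = true ∧ vE ⟨n - 1, Nat.sub_lt hn Nat.one_pos⟩ = true) ∧
    ((vN = true ∨ vW ⟨0, hn⟩ = true) ↔
      (vS = true ∨ vE ⟨n - 1, Nat.sub_lt hn Nat.one_pos⟩ = true))

lemma vertexGood_of_weight_ne_zero {R : Type*} [CommRing R] {n : ℕ} (hn : 0 < n) {q x : R}
    {vN vS : Bool} {vW vE : Fin n → Bool}
    (h : vertexWeight n (horizTable q x) vN vS vW vE ≠ 0) : VertexGood n hn vN vS vW vE := by
  unfold vertexWeight at h
  rw [dif_pos hn] at h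
  split_ifs at h with hshift
  · refine ⟨hshift, ?_⟩
    generalize vW ⟨0, hn⟩ = a at *
    generalize vE ⟨n - 1, Nat.sub_lt hn Nat.one_pos⟩ = b at *
    cases vN <;> cases vS <;> cases a <;> cases b <;> simp [classify, horizTable] at h ⊢
  · exact absurd rfl h

lemma vertexWeight_of_good {R : Type*} [CommRing R] {n : ℕ} (hn : 0 < n) (q x : R)
    {vN vS : Bool} {vW vE : Fin n → Bool} (h : VertexGood n hn vN vS vW vE) :
    vertexWeight n (horizTable q x) vN vS vW vE =
      q ^ (if vN = true ∨ vW ⟨0, hn⟩ = true then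
        (Finset.univ.filter fun k : Fin n => k.val < n - 1 ∧ vE k = true).card else 0) *
      x ^ (if vE ⟨n - 1, Nat.sub_lt hn Nat.one_pos⟩ = true then 1 else 0) := by
  obtain ⟨hshift, h⟩ := h
  unfold vertexWeight
  rw [dif_pos hn, if_pos hshift]
  generalize (Finset.univ.filter fun k : Fin n => k.val < n - 1 ∧ vE k = true).card = s
  generalize vW ⟨0, hn⟩ = a at *
  generalize vE ⟨n - 1, Nat.sub_lt hn Nat.one_pos⟩ = b at *
  cases vN <;> cases vS <;> cases a <;> cases b <;> simp [classify, horizTable] at h ⊢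

lemma diagBoundary_eq_true {κ : YoungDiagram} {N C : ℕ} (c : Fin C) :
    diagBoundary κ N C c = true ↔ ((c : ℤ) + 1) ∈ maya κ N := by
  simp only [diagBoundary, decide_eq_true_eq, Finset.mem_image, Finset.mem_range, mem_maya, pos]
  refine exists_congr fun t => and_congr_right fun ht => ?_
  omega

/-- The state attached to a set `A` of jumps: the `k`-th label on the edge `e` is `<` exactly
if a jump starts at the site `e - (n - k)`; positions in the tuple are counted from `1`. -/
noncomputable def stateOf (n C : ℕ) (top bottom : Fin C → Bool) (A : Finset ℤ) :
    GridState n 1 C :=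
  (fun r => if r = 0 then top else bottom,
    fun _ e k => decide ((e : ℤ) + k + 1 - n ∈ A))

/-- The set of jumps of a state: the edges whose last label is `<`. -/
def jumpSet {n C : ℕ} (hn : 0 < n) (st : GridState n 1 C) : Finset ℤ :=
  (Finset.univ.filter fun e : Fin (C + 1) =>
    st.2 0 e ⟨n - 1, Nat.sub_lt hn Nat.one_pos⟩ = true).image fun e : Fin (C + 1) => ((e : ℕ) : ℤ)

lemma mem_jumpSet {n C : ℕ} (hn : 0 < n) (st : GridState n 1 C) (e : Fin (C + 1)) :
    (e : ℤ) ∈ jumpSet hn st ↔ st.2 0 e ⟨n - 1, Nat.sub_lt hn Nat.one_pos⟩ = true := by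
  simp only [jumpSet, Finset.mem_image, Finset.mem_filter, Finset.mem_univ, true_and]
  constructor
  · rintro ⟨e', he', h⟩
    obtain rfl : e' = e := Fin.ext (by exact_mod_cast h)
    exact he'
  · intro h
    exact ⟨e, h, rfl⟩

/-- A state whose vertices are all good is determined by its jumps. -/
lemma label_iff {n C : ℕ} (hn : 0 < n) {top bottom : Fin C → Bool} {st : GridState n 1 C}
    (hbc : BoundaryCond top bottom (fun _ _ => false) (fun _ _ => false) st)
    (hgood : ∀ c : Fin C, VertexGood n hn (st.1 0 c) (st.1 1 c) (st.2 0 c.castSucc)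
      (st.2 0 c.succ)) (e : Fin (C + 1)) :
    ∀ k : Fin n, st.2 0 e k = true ↔ (e : ℤ) + k + 1 - n ∈ jumpSet hn st := by
  have hzero : ∀ k, st.2 0 0 k = false := fun k => by rw [(hbc.2.2 0).1]
  induction e using Fin.induction with
  | zero =>
    intro k
    rw [hzero k]
    simp only [Bool.false_eq_true, false_iff]
    intro h
    obtain ⟨e', he', h⟩ := Finset.mem_image.1 h
    have he0 : e' = 0 := by
      have := k.2
      apply Fin.ext
      simp only [Fin.val_zero] at h ⊢
      push_cast at h
      omega
    rw [Finset.mem_filter, he0, hzero] at he'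
    simp at he'
  | succ c ih =>
    intro k
    by_cases hk : k.val + 1 < n
    · rw [(hgood c).1 k hk, ih]
      apply iff_of_eq
      congr 1
      simp only [Fin.val_succ, Fin.val_castSucc]
      push_cast
      ring
    · have hkn : k = ⟨n - 1, Nat.sub_lt hn Nat.one_pos⟩ := by
        have := k.2
        apply Fin.ext
        simp only
        omega
      have he : ((c.succ : Fin (C + 1)) : ℤ) + k + 1 - n = ((c.succ : Fin (C + 1)) : ℤ) := by
        have := k.2
        omega
      rw [he, mem_jumpSet, hkn]

/-- A state whose vertices are all good comes from a system of jumps. -/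
lemma exists_valid_of_state {n C : ℕ} (hn : 0 < n) {top bottom : Fin C → Bool}
    {M L : Finset ℤ}
    (htop : ∀ c, top c = true ↔ ((c : ℤ) + 1) ∈ M)
    (hbot : ∀ c, bottom c = true ↔ ((c : ℤ) + 1) ∈ L)
    (hM : ∀ p ∈ M, 1 ≤ p ∧ p ≤ C) (hL : ∀ p ∈ L, 1 ≤ p ∧ p ≤ C)
    {st : GridState n 1 C}
    (hbc : BoundaryCond top bottom (fun _ _ => false) (fun _ _ => false) st)
    (hgood : ∀ c : Fin C, VertexGood n hn (st.1 0 c) (st.1 1 c) (st.2 0 c.castSucc)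
      (st.2 0 c.succ)) :
    ∃ A, Valid n M L A ∧ st = stateOf n C top bottom A := by
  have hlab := label_iff hn hbc hgood
  have h0 : st.1 0 = top := hbc.1
  have h1 : st.1 1 = bottom := hbc.2.1
  have hright : ∀ k, st.2 0 (Fin.last C) k = false := fun k => by rw [(hbc.2.2 0).2]
  have hleft : ∀ k, st.2 0 0 k = false := fun k => by rw [(hbc.2.2 0).1]
  have hA : ∀ p ∈ jumpSet hn st, 1 ≤ p ∧ p ≤ (C : ℤ) - n := by
    intro p hp
    have hp' := hp
    obtain ⟨e, he, rfl⟩ := Finset.mem_image.1 hp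
    have heC := e.2
    constructor
    · by_contra hlt
      obtain rfl : e = 0 := Fin.ext (by simp only [Fin.val_zero]; omega)
      rw [Finset.mem_filter, hleft] at he
      simp at he
    · by_contra hlt
      -- such a jump would be recorded on the right boundary edge
      have := (hlab (Fin.last C) ⟨e + n - 1 - C, by omega⟩).2 (by
        convert hp' using 1
        simp only [Fin.val_last]
        omega)
      rw [hright] at this
      simp at this
  refine ⟨jumpSet hn st, ?_, ?_⟩
  · intro p
    by_cases hp : 1 ≤ p ∧ p ≤ C
    · obtain ⟨c, hc⟩ : ∃ c : Fin C, (c : ℤ) + 1 = p :=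
        ⟨⟨(p - 1).toNat, by omega⟩, by simp only; omega⟩
      obtain ⟨-, g1, g2, g3⟩ := hgood c
      have e1 : ((c.castSucc : Fin (C + 1)) : ℤ) + ((⟨0, hn⟩ : Fin n) : ℕ) + 1 - n = p - n := by
        simp only [Fin.val_castSucc]
        push_cast
        omega
      have e2 : ((c.succ : Fin (C + 1)) : ℤ) +
          ((⟨n - 1, Nat.sub_lt hn Nat.one_pos⟩ : Fin n) : ℕ) + 1 - n = p := by
        simp only [Fin.val_succ]
        omega
      simp only [h0, h1, htop, hbot, hlab, e1, e2, hc] at g1 g2 g3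
      exact ⟨g1, g2, g3⟩
    · have m1 : p ∉ M := fun h => hp (hM p h)
      have m2 : p ∉ L := fun h => hp (hL p h)
      have m3 : p ∉ jumpSet hn st := fun h => hp (by have := hA p h; omega)
      have m4 : p - n ∉ jumpSet hn st := fun h => hp (by have := hA _ h; omega)
      simp [m1, m2, m3, m4]
  · refine Prod.ext ?_ ?_
    · funext r
      fin_cases r
      · simpa [stateOf] using h0
      · simpa [stateOf] using h1
    · funext r e k
      obtain rfl : r = 0 := Subsingleton.elim _ _
      rw [Bool.eq_iff_iff, hlab]
      simp [stateOf]

lemma Valid.bounds {n C : ℕ} {M L A : Finset ℤ} (hA : Valid n M L A)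
    (hM : ∀ p ∈ M, 1 ≤ p ∧ p ≤ C) (hL : ∀ p ∈ L, 1 ≤ p ∧ p ≤ C)
    (hn : 0 < n) :
    ∀ a ∈ A, 1 ≤ a ∧ a + n ≤ C := by
  intro a ha
  obtain ⟨b, hb, hmin⟩ := Finset.exists_min_image A id ⟨a, ha⟩
  obtain ⟨d, hd, hmax⟩ := Finset.exists_max_image A id ⟨a, ha⟩
  have h1 := hmin a ha
  have h2 := hmax a ha
  have hbM : b ∈ M := by
    have h3 : b - n ∉ A := fun h => by have := hmin _ h; simp only [id] at this; omega
    exact ((hA b).2.2.2 (Or.inr hb)).resolve_right h3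
  have hdL : d + n ∈ L := by
    have h3 : d + n ∉ A := fun h => by have := hmax _ h; simp only [id] at this; omega
    exact ((hA (d + n)).2.2.1 (Or.inr (by simpa using hd))).resolve_right h3
  have := hM b hbM
  have := hL _ hdL
  simp only [id] at *
  omega

lemma stateOf_boundary {n C : ℕ} (hn : 0 < n) {top bottom : Fin C → Bool} {M L A : Finset ℤ}
    (hM : ∀ p ∈ M, 1 ≤ p ∧ p ≤ C) (hL : ∀ p ∈ L, 1 ≤ p ∧ p ≤ C)
    (hA : Valid n M L A) :
    BoundaryCond top bottom (fun _ _ => false) (fun _ _ => false)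
      (stateOf n C top bottom A) := by
  have hb := hA.bounds hM hL hn
  refine ⟨by simp [stateOf], by simp [stateOf], fun r => ⟨?_, ?_⟩⟩
  · funext k
    have := k.2
    simp only [stateOf, decide_eq_false_iff_not]
    intro h
    have := hb _ h
    simp only [Fin.val_zero] at this
    push_cast at this
    omega
  · funext k
    have := k.2
    simp only [stateOf, decide_eq_false_iff_not]
    intro h
    have := hb _ h
    simp only [Fin.val_last] at this
    omega

lemma stateOf_good {n C : ℕ} (hn : 0 < n) {top bottom : Fin C → Bool} {M L A : Finset ℤ}
    (htop : ∀ c, top c = true ↔ ((c : ℤ) + 1) ∈ M)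
    (hbot : ∀ c, bottom c = true ↔ ((c : ℤ) + 1) ∈ L)
    (hA : Valid n M L A) (c : Fin C) :
    VertexGood n hn (top c) (bottom c) ((stateOf n C top bottom A).2 0 c.castSucc)
      ((stateOf n C top bottom A).2 0 c.succ) := by
  refine ⟨fun k hk => ?_, ?_⟩
  · simp only [stateOf, Fin.val_succ, Fin.val_castSucc]
    congr 2
    push_cast
    ring
  · have e1 : (c : ℤ) + ((0 : ℕ) : ℤ) + 1 - n = c + 1 - n := by push_cast; ring
    have e2 : ((c.val + 1 : ℕ) : ℤ) + ((n - 1 : ℕ) : ℤ) + 1 - n = c + 1 := by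
      omega
    simp only [stateOf, decide_eq_true_eq, Fin.val_castSucc, Fin.val_succ, htop, hbot]
    rw [e1, e2]
    exact hA _

/-- The statistic `s(v)` at the site `p = c + 1` counts the jumps passing over `p`. -/
lemma card_window {n C : ℕ} {top bottom : Fin C → Bool} (A : Finset ℤ) (c : Fin C) :
    (Finset.univ.filter fun k : Fin n => k.val < n - 1 ∧
      (stateOf n C top bottom A).2 0 c.succ k = true).card =
    (A.filter fun a => a < (c : ℤ) + 1 ∧ (c : ℤ) + 1 < a + n).card := by
  apply Finset.card_bij (fun (k : Fin n) _ => (c : ℤ) + 1 + (k : ℕ) + 1 - n)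
  · intro k hk
    simp only [stateOf, Finset.mem_filter, Finset.mem_univ, true_and, decide_eq_true_eq,
      Fin.val_succ] at hk ⊢
    push_cast at hk
    refine ⟨hk.2, ?_, ?_⟩ <;> omega
  · intro k _ k' _ h
    apply Fin.ext
    omega
  · intro a ha
    simp only [Finset.mem_filter] at ha
    refine ⟨⟨(a + n - c - 2).toNat, by omega⟩, ?_, ?_⟩
    · simp only [stateOf, Finset.mem_filter, Finset.mem_univ, true_and, decide_eq_true_eq,
        Fin.val_succ]
      refine ⟨by omega, ?_⟩
      convert ha.1 using 1
      omega
    · simp only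
      omega

lemma sum_sites {C : ℕ} {f : ℤ → ℕ} :
    ∑ c : Fin C, f ((c : ℤ) + 1) = ∑ p ∈ Finset.Icc (1 : ℤ) C, f p := by
  apply Finset.sum_bij (fun (c : Fin C) _ => (c : ℤ) + 1)
  · intro c _
    have := c.2
    simp only [Finset.mem_Icc]
    omega
  · intro c _ c' _ h
    apply Fin.ext
    omega
  · intro p hp
    rw [Finset.mem_Icc] at hp
    exact ⟨⟨(p - 1).toNat, by omega⟩, Finset.mem_univ _, by simp only; omega⟩
  · intro _ _
    rfl

/-- The weight of the state attached to a system of jumps. -/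
lemma stateWeight_stateOf {n C : ℕ} (hn : 0 < n) {top bottom : Fin C → Bool}
    {M L A : Finset ℤ}
    (htop : ∀ c, top c = true ↔ ((c : ℤ) + 1) ∈ M)
    (hbot : ∀ c, bottom c = true ↔ ((c : ℤ) + 1) ∈ L)
    (hM : ∀ p ∈ M, 1 ≤ p ∧ p ≤ C) (hL : ∀ p ∈ L, 1 ≤ p ∧ p ≤ C)
    {R : Type*} [CommRing R] (q x : R) (hA : Valid n M L A) :
    stateWeight n 1 C (fun _ => horizTable q x) (stateOf n C top bottom A) =
      q ^ spinExp n M A * x ^ A.card := by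
  have hb := hA.bounds hM hL hn
  unfold stateWeight
  rw [Fin.prod_univ_one]
  have hv : ∀ c : Fin C, vertexWeight n (horizTable q x)
      ((stateOf n C top bottom A).1 (Fin.castSucc 0) c)
      ((stateOf n C top bottom A).1 (Fin.succ 0) c)
      ((stateOf n C top bottom A).2 0 c.castSucc) ((stateOf n C top bottom A).2 0 c.succ) =
      q ^ (if (c : ℤ) + 1 ∈ M ∨ (c : ℤ) + 1 - n ∈ A then
        (A.filter fun a => a < (c : ℤ) + 1 ∧ (c : ℤ) + 1 < a + n).card else 0) *
      x ^ (if (c : ℤ) + 1 ∈ A then 1 else 0) := by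
    intro c
    have e0 : (stateOf n C top bottom A).1 (Fin.castSucc 0) c = top c := by simp [stateOf]
    have e1 : (stateOf n C top bottom A).1 (Fin.succ 0) c = bottom c := by simp [stateOf]
    rw [e0, e1, vertexWeight_of_good hn q x (stateOf_good hn htop hbot hA c), card_window]
    have e2 : (stateOf n C top bottom A).2 0 c.castSucc ⟨0, hn⟩ = true ↔
        (c : ℤ) + 1 - n ∈ A := by
      simp [stateOf]
    have e3 : (stateOf n C top bottom A).2 0 c.succ ⟨n - 1, Nat.sub_lt hn Nat.one_pos⟩ = true ↔
        (c : ℤ) + 1 ∈ A := by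
      simp only [stateOf, decide_eq_true_eq, Fin.val_succ]
      apply iff_of_eq
      congr 1
      omega
    simp only [htop, e2, e3]
  rw [Finset.prod_congr rfl fun c _ => hv c, Finset.prod_mul_distrib, Finset.prod_pow_eq_pow_sum,
    Finset.prod_pow_eq_pow_sum]
  rw [sum_sites (f := fun p => if p ∈ M ∨ p - n ∈ A then
      (A.filter fun a => a < p ∧ p < a + n).card else 0),
    sum_sites (f := fun p => if p ∈ A then 1 else 0)]
  congr 2
  · -- double counting of pairs (jump, occupied site jumped over)
    unfold spinExp
    simp only [Finset.card_filter]
    have hswap : ∀ p ∈ Finset.Icc (1 : ℤ) C, (if p ∈ M ∨ p - n ∈ A then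
        ∑ a ∈ A, (if a < p ∧ p < a + n then 1 else 0) else 0) =
        ∑ a ∈ A, (if (a < p ∧ p < a + n) ∧ (p ∈ M ∨ p - n ∈ A) then 1 else 0) := by
      intro p _
      split_ifs with h <;> simp [h]
    rw [Finset.sum_congr rfl hswap, Finset.sum_comm]
    refine Finset.sum_congr rfl fun a ha => ?_
    rw [← Finset.card_filter, ← Finset.card_filter]
    congr 1
    ext p
    have := hb a ha
    simp only [Finset.mem_filter, Finset.mem_Icc, Finset.mem_Ioo]
    constructor
    · exact fun h => h.2
    · intro h
      exact ⟨by omega, h⟩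
  · rw [← Finset.card_filter]
    congr 1
    ext p
    simp only [Finset.mem_filter, Finset.mem_Icc]
    constructor
    · exact fun h => h.2
    · intro h
      have := hb p h
      exact ⟨by omega, h⟩

lemma good_of_stateWeight_ne_zero {n C : ℕ} (hn : 0 < n) {R : Type*} [CommRing R] {q x : R}
    {st : GridState n 1 C}
    (h : stateWeight n 1 C (fun _ => horizTable q x) st ≠ 0) (c : Fin C) :
    VertexGood n hn (st.1 0 c) (st.1 1 c) (st.2 0 c.castSucc) (st.2 0 c.succ) := by
  apply vertexGood_of_weight_ne_zero hn (q := q) (x := x)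
  intro h0
  apply h
  unfold stateWeight
  rw [Fin.prod_univ_one]
  exact Finset.prod_eq_zero (Finset.mem_univ c) h0

lemma maya_bounds {κ lam : YoungDiagram} (h : κ ≤ lam) (N : ℕ) :
    ∀ p ∈ maya κ N, 1 ≤ p ∧ p ≤ ((lam.rowLen 0 + N : ℕ) : ℤ) := by
  intro p hp
  obtain ⟨t, ht, rfl⟩ := mem_maya.1 hp
  have h1 := rowLen_le_of_le h t
  have h2 := lam.rowLen_anti 0 t (Nat.zero_le t)
  simp only [pos]
  push_cast
  omega

end SuperLLT

namespace SuperLLT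

/-! ### States and horizontal strips -/

lemma mem_horizontalTilings {n : ℕ} {μ lam : YoungDiagram} {T : Finset (Finset (ℕ × ℕ))} :
    T ∈ horizontalTilings n μ lam ↔ IsHorizontalTiling n (lam.cells \ μ.cells) T := by
  simp only [horizontalTilings, Finset.mem_filter, Finset.mem_powerset, and_iff_right_iff_imp]
  intro hT t ht
  rw [Finset.mem_powerset, ← hT.1.2.2]
  exact Finset.le_sup (f := id) ht

/-- **One-row lattice model and horizontal ribbon strips** (Proposition `prop:hribbon`).
Let `n ≥ 1`, let `lam/μ` be a skew shape, and let `N` be at least the number of parts of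
`lam`.  In the one-row `n`-ribbon lattice model with horizontal-strip weights (generic
parameters `q = X 0`, `x = X 1` in `ℤ[q,x]`) and boundary condition `B_{lam/μ}`, the
states of nonzero weight are in bijection with the horizontal `n`-ribbon strip tilings of
`lam/μ`, the state corresponding to a strip of `m` ribbons of total spin `σ` having
weight `q^σ x^m`.  Consequently (now over any commutative ring) the partition function
equals `Σ_S q^{σ(S)} x^{m(S)}`, summed over all horizontal strips `S` of shape
`lam/μ`. -/
theorem oneRow_horizontal_strips (n : ℕ) (hn : 1 ≤ n) (μ lam : YoungDiagram)
    (hμlam : μ ≤ lam) (N : ℕ) (hN : lam.colLen 0 ≤ N) :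
    (∃ φ : {st : GridState n 1 (lam.rowLen 0 + N) //
          BoundaryCond (diagBoundary μ N (lam.rowLen 0 + N))
              (diagBoundary lam N (lam.rowLen 0 + N))
              (fun _ _ => false) (fun _ _ => false) st ∧
            stateWeight n 1 (lam.rowLen 0 + N)
              (fun _ => horizTable (MvPolynomial.X 0) (MvPolynomial.X 1)
                (R := MvPolynomial (Fin 2) ℤ)) st ≠ 0} ≃
        {tiles : Finset (Finset (ℕ × ℕ)) //
          IsHorizontalTiling n (lam.cells \ μ.cells) tiles},
      ∀ st, stateWeight n 1 (lam.rowLen 0 + N)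
          (fun _ => horizTable (MvPolynomial.X 0) (MvPolynomial.X 1)
            (R := MvPolynomial (Fin 2) ℤ)) st.val =
        MvPolynomial.X 0 ^ tilesSpin (φ st).val *
          MvPolynomial.X 1 ^ (φ st).val.card) ∧
    (∀ (R : Type) [CommRing R], ∀ q x : R,
        partitionZ n 1 (lam.rowLen 0 + N) (fun _ => horizTable q x)
            (diagBoundary μ N (lam.rowLen 0 + N)) (diagBoundary lam N (lam.rowLen 0 + N))
            (fun _ _ => false) (fun _ _ => false) =
          ∑ tiles ∈ horizontalTilings n μ lam, q ^ tilesSpin tiles * x ^ tiles.card) := by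
  have hlam0 : lam.rowLen N = 0 := by
    by_contra h
    have h1 : (N, 0) ∈ lam := YoungDiagram.mem_iff_lt_rowLen.2 (Nat.pos_of_ne_zero h)
    have h2 := YoungDiagram.mem_iff_lt_colLen.1 h1
    omega
  have hμ0 : μ.rowLen N = 0 := by
    have := rowLen_le_of_le hμlam N
    omega
  generalize hC : lam.rowLen 0 + N = C
  have hM : ∀ p ∈ maya μ N, 1 ≤ p ∧ p ≤ (C : ℤ) := hC ▸ maya_bounds hμlam N
  have hL : ∀ p ∈ maya lam N, 1 ≤ p ∧ p ≤ (C : ℤ) := hC ▸ maya_bounds le_rfl N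
  have htop := fun c : Fin C => diagBoundary_eq_true (κ := μ) (N := N) c
  have hbot := fun c : Fin C => diagBoundary_eq_true (κ := lam) (N := N) c
  -- states of nonzero weight come from systems of jumps, whatever the weights
  have hstate : ∀ {R : Type} [CommRing R] {q x : R} {st : GridState n 1 C},
      BoundaryCond (diagBoundary μ N C) (diagBoundary lam N C)
        (fun _ _ => false) (fun _ _ => false) st →
      stateWeight n 1 C (fun _ => horizTable q x) st ≠ 0 →
      ∃ A, Valid n (maya μ N) (maya lam N) A ∧
        st = stateOf n C (diagBoundary μ N C) (diagBoundary lam N C) A := by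
    intro R _ q x st hbc hw
    exact exists_valid_of_state hn htop hbot hM hL hbc (good_of_stateWeight_ne_zero hn hw)
  by_cases hex : ∃ A, Valid n (maya μ N) (maya lam N) A
  · obtain ⟨A, hA⟩ := hex
    obtain ⟨-, T, hT, hTA⟩ := exists_tiling_of_valid hn hlam0 _ μ A hμ0 rfl hA
    have hbc := stateOf_boundary (top := diagBoundary μ N C) (bottom := diagBoundary lam N C)
      hn hM hL hA
    have hw : ∀ {R : Type} [CommRing R] (q x : R),
        stateWeight n 1 C (fun _ => horizTable q x)
          (stateOf n C (diagBoundary μ N C) (diagBoundary lam N C) A) =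
        q ^ tilesSpin T * x ^ T.card := by
      intro R _ q x
      rw [stateWeight_stateOf hn htop hbot hM hL q x hA, hTA.1, hTA.2.1]
    have hstuniq : ∀ {R : Type} [CommRing R] {q x : R} {st : GridState n 1 C},
        BoundaryCond (diagBoundary μ N C) (diagBoundary lam N C)
          (fun _ _ => false) (fun _ _ => false) st →
        stateWeight n 1 C (fun _ => horizTable q x) st ≠ 0 →
        st = stateOf n C (diagBoundary μ N C) (diagBoundary lam N C) A := by
      intro R _ q x st hbc hw
      obtain ⟨B, hB, rfl⟩ := hstate hbc hw
      rw [Valid.unique hn hA hB]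
    have hTuniq : ∀ T', IsHorizontalTiling n (lam.cells \ μ.cells) T' → T' = T :=
      fun T' hT' => tiling_unique hn hlam0 _ μ T' T hμlam rfl hT' hT
    have hne : stateWeight n 1 C (fun _ => horizTable (MvPolynomial.X 0) (MvPolynomial.X 1)
        (R := MvPolynomial (Fin 2) ℤ))
        (stateOf n C (diagBoundary μ N C) (diagBoundary lam N C) A) ≠ 0 := by
      rw [hw]
      exact mul_ne_zero (pow_ne_zero _ (MvPolynomial.X_ne_zero _))
        (pow_ne_zero _ (MvPolynomial.X_ne_zero _))
    refine ⟨⟨⟨fun _ => ⟨T, hT⟩, fun _ => ⟨_, hbc, hne⟩, ?_, ?_⟩, ?_⟩, ?_⟩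
    · intro st
      exact Subtype.ext (hstuniq st.2.1 st.2.2).symm
    · intro T'
      exact Subtype.ext (hTuniq _ T'.2).symm
    · intro st
      exact (congrArg _ (hstuniq st.2.1 st.2.2)).trans (hw _ _)
    · intro R _ q x
      unfold partitionZ
      rw [Finset.sum_eq_single (stateOf n C (diagBoundary μ N C) (diagBoundary lam N C) A),
        Finset.sum_eq_single T, hw]
      · intro T' hT' hne'
        exact absurd (hTuniq T' (mem_horizontalTilings.1 hT')) hne'
      · intro h
        exact absurd (mem_horizontalTilings.2 hT) h
      · intro st hst hne'
        by_contra h0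
        simp only [Finset.mem_filter, Finset.mem_univ, true_and] at hst
        exact hne' (hstuniq hst h0)
      · intro h
        simp only [Finset.mem_filter, Finset.mem_univ, true_and] at h
        exact absurd hbc h
  · have hnoT : ∀ T, ¬IsHorizontalTiling n (lam.cells \ μ.cells) T := by
      intro T hT
      obtain ⟨A, hA, -⟩ := exists_valid_of_tiling hn hlam0 _ μ T hμlam rfl hT
      exact hex ⟨A, hA⟩
    refine ⟨⟨⟨fun st => ?_, fun T => (hnoT T.1 T.2).elim, fun st => ?_, fun T => ?_⟩,
      fun st => ?_⟩, ?_⟩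
    · exact (hex ((hstate st.2.1 st.2.2).imp fun _ h => h.1)).elim
    · exact (hex ((hstate st.2.1 st.2.2).imp fun _ h => h.1)).elim
    · exact (hnoT T.1 T.2).elim
    · exact (hex ((hstate st.2.1 st.2.2).imp fun _ h => h.1)).elim
    · intro R _ q x
      unfold partitionZ
      rw [Finset.sum_eq_zero, Finset.sum_eq_zero]
      · intro T hT
        exact (hnoT T (mem_horizontalTilings.1 hT)).elim
      · intro st hst
        by_contra h0
        simp only [Finset.mem_filter, Finset.mem_univ, true_and] at hst
        exact hex ((hstate hst h0).imp fun _ h => h.1)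

end SuperLLT
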